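/- arXiv:2504.14198 — 2 statements merged into one kernel-verified Lean document; each statement's English description precedes it below -/
import Mathlib

section
/- Let F be a field, let n ≥ 2, let S_n be any one of the sets B_n, C_n, D_n, and let T : M_n(F) → M_n(F) be a bijective linear map such that T(S_n) ⊆ S_n. Then there exist a scalar r ∈ F with r^(2n) = 1 and an invertible matrix P ∈ M_n(F) such that either T(X) = r·T(I)·P·X·P⁻¹ for all X ∈ M_n(F) with trace(X) = 0, or T(X) = r·T(I)·P·Xᵗ·P⁻¹ for all X ∈ M_n(F) with trace(X) = 0. Moreover, if char(F) = p > 0 and p divides n, then r = 1. -/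
open Matrix

/-- The set of matrices that are products of two involutions. -/
def ProdInv2 (F : Type*) [Field F] (n : ℕ) : Set (Matrix (Fin n) (Fin n) F) :=
  {A | ∃ J₁ J₂ : Matrix (Fin n) (Fin n) F, J₁ * J₁ = 1 ∧ J₂ * J₂ = 1 ∧ A = J₁ * J₂}

/-- The set of matrices that are products of three involutions. -/
def ProdInv3 (F : Type*) [Field F] (n : ℕ) : Set (Matrix (Fin n) (Fin n) F) :=
  {A | ∃ J₁ J₂ J₃ : Matrix (Fin n) (Fin n) F,
    J₁ * J₁ = 1 ∧ J₂ * J₂ = 1 ∧ J₃ * J₃ = 1 ∧ A = J₁ * J₂ * J₃}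

/-- The set of matrices that are products of four involutions. -/
def ProdInv4 (F : Type*) [Field F] (n : ℕ) : Set (Matrix (Fin n) (Fin n) F) :=
  {A | ∃ J₁ J₂ J₃ J₄ : Matrix (Fin n) (Fin n) F,
    J₁ * J₁ = 1 ∧ J₂ * J₂ = 1 ∧ J₃ * J₃ = 1 ∧ J₄ * J₄ = 1 ∧ A = J₁ * J₂ * J₃ * J₄}

/-!
A product of involutions has determinant `± 1`, so `T` maps products of two involutions to
invertible matrices. This already forces the stated form on all matrices, with `r = 1`.

Every near unipotent operator (unipotent, up to one companion block of `X ^ 2 - c * X + 1`) is a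
product of two involutions, and every affine subspace of `End V` of codimension less than `dim V`
contains one. Fix `e ≠ 0` and a vector `v` such that `T 1 v = T X₀ v` for some `X₀` with
`X₀ e = 0`. If `X ↦ T X v` had rank at least two on the operators `x ↦ l x • e` with `l e = 0`,
then the condition `T A v = 0` would cut out such an affine subspace modulo these operators, and
`T A` would be singular for a near unipotent `A`. So these vectors `v` yield linear maps of rank at
most one, and linear spaces of such maps have a common image line or a common kernel. It follows
that the `T X` with `X e = 0` have a common null vector on the right or on the left. Comparing
different `e` gives `T X = P * X * Q` or `T X = P * Xᵀ * Q`, and `P * Q = T 1`.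

The rank one argument fails for `n = 2` and for `n = 3` over `𝔽₂`. For `n = 2` one shows instead
that `T` or its inverse preserves singularity, from `det (T A) = ± 1` for `det A = 1` or, if all
nonzero scalars are `± 1`, from invertibility. Over `𝔽₂`, if `φ` takes values in `𝔽₂³` and does not
vanish on products of two involutions, then by orthogonality of the characters
`X ↦ (-1) ^ trace (K * X)` suitable weights on those products have character sums of total `0` over
the functionals `u ⬝ᵥ φ X`. This is possible only if the corresponding `K` have rank at most one.
-/

section StrongReversibility

open Polynomial

variable {F V W : Type*} [Field F] [AddCommGroup V] [Module F V] [AddCommGroup W] [Module F W]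

/-- Strong reversibility: `A` is inverted by an involution. For matrices this is the same as being
a product of two involutions, but it makes no reference to an inverse of `A`. -/
def IsStronglyReversible (A : Module.End F V) : Prop :=
  ∃ J : Module.End F V, (∀ x, J (J x) = x) ∧ ∀ x, A (J (A x)) = J x

theorem IsStronglyReversible.of_conj {A : Module.End F V} {B : Module.End F W}
    (hB : IsStronglyReversible B) (Φ : W ≃ₗ[F] V) (h : ∀ w, Φ (B w) = A (Φ w)) :
    IsStronglyReversible A := by
  obtain ⟨J, hJ, hBJ⟩ := hB
  refine ⟨Φ.conj J, fun x => by simp [hJ], fun x => ?_⟩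
  obtain ⟨w, rfl⟩ := Φ.surjective x
  simp only [LinearEquiv.conj_apply_apply, ← h, LinearEquiv.symm_apply_apply, hBJ]

theorem IsStronglyReversible.prodMap {A : Module.End F V} {B : Module.End F W}
    (hA : IsStronglyReversible A) (hB : IsStronglyReversible B) :
    IsStronglyReversible (A.prodMap B : Module.End F (V × W)) := by
  obtain ⟨J, hJ, hAJ⟩ := hA
  obtain ⟨K, hK, hBK⟩ := hB
  exact ⟨J.prodMap K, fun x => by simp [hJ, hK], fun x => by simp [hAJ, hBK]⟩

theorem isUnit_mk_X_quotient_X_sub_one_pow (k : ℕ) :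
    IsUnit (Ideal.Quotient.mk (Ideal.span {(X - 1 : F[X]) ^ k}) X) := by
  have hnil : IsNilpotent (Ideal.Quotient.mk (Ideal.span {(X - 1 : F[X]) ^ k}) (X - 1)) :=
    ⟨k, by rw [← map_pow, Ideal.Quotient.eq_zero_iff_mem]; exact Ideal.mem_span_singleton_self _⟩
  simpa using hnil.isUnit_one_add

theorem exists_involution_X_smul_quotient_X_sub_one_pow (k : ℕ) :
    ∃ j : (F[X] ⧸ (F[X] ∙ (X - 1 : F[X]) ^ k)) →ₗ[F] (F[X] ⧸ (F[X] ∙ (X - 1 : F[X]) ^ k)),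
      (∀ m, j (j m) = m) ∧ ∀ m, (X : F[X]) • j ((X : F[X]) • m) = j m := by
  let I : Ideal F[X] := Ideal.span {(X - 1) ^ k}
  let x : F[X] ⧸ I := Ideal.Quotient.mk I X
  obtain ⟨y, hxy⟩ : ∃ y, x * y = 1 := (isUnit_mk_X_quotient_X_sub_one_pow k).exists_right_inv
  have hx : (x - 1) ^ k = 0 := by
    have : (x - 1) ^ k = Ideal.Quotient.mk I ((X - 1) ^ k) := by simp [x]
    rw [this, Ideal.Quotient.eq_zero_iff_mem]
    exact Ideal.mem_span_singleton_self _
  have hy : (y - 1) ^ k = 0 := by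
    rw [show y - 1 = -y * (x - 1) by linear_combination hxy, mul_pow, hx, mul_zero]
  have hker : ∀ a ∈ I, aeval y a = 0 := fun a ha => by
    obtain ⟨b, rfl⟩ := Ideal.mem_span_singleton'.1 ha
    simp [hy]
  let j : (F[X] ⧸ I) →ₐ[F] (F[X] ⧸ I) := Ideal.Quotient.liftₐ I (aeval y) hker
  have hjx : j x = y := (Ideal.Quotient.lift_mk I _ hker).trans (aeval_X y)
  have hjy : j y = x := by
    have h : y * j y = 1 := by rw [← hjx, ← map_mul, hjx, hxy, map_one]
    linear_combination x * h - j y * hxy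
  have hjj : j.comp j = AlgHom.id F _ :=
    Ideal.Quotient.algHom_ext _ <| Polynomial.algHom_ext <|
      show j (j x) = x by rw [hjx, hjy]
  refine ⟨j.toLinearMap, DFunLike.congr_fun hjj, fun m => ?_⟩
  change x * j (x * m) = j m
  rw [map_mul, hjx, ← mul_assoc, hxy, one_mul]

theorem IsStronglyReversible.of_isNilpotent_sub_one [FiniteDimensional F V] {A : Module.End F V}
    (hA : IsNilpotent (A - 1)) : IsStronglyReversible A := by
  classical
  obtain ⟨k, hk⟩ := hA
  have hirr : Irreducible (X - 1 : F[X]) := by simpa using irreducible_X_sub_C (1 : F)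
  have htor : Module.IsTorsion' (Module.AEval' A) (Submonoid.powers (X - 1 : F[X])) := fun m => by
    obtain ⟨m, rfl⟩ := (Module.AEval'.of A).surjective m
    refine ⟨⟨(X - 1) ^ k, k, rfl⟩, ?_⟩
    refine (Module.AEval.of_aeval_smul (R := F) (a := A) ((X - 1 : F[X]) ^ k) m).symm.trans ?_
    rw [show aeval A ((X - 1 : F[X]) ^ k) = 0 by simpa using hk, zero_smul, map_zero]
  obtain ⟨d, ks, ⟨Φ⟩⟩ := Module.torsion_by_prime_power_decomposition hirr htor
  choose j hj hXj using fun i => exists_involution_X_smul_quotient_X_sub_one_pow (F := F) (ks i)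
  let Ψ := (Module.AEval'.of A).trans (Φ.restrictScalars F)
  have hΨ (x : V) : Ψ (A x) = (X : F[X]) • Ψ x := by
    change Φ (Module.AEval'.of A (A x)) = (X : F[X]) • Φ (Module.AEval'.of A x)
    rw [← map_smul, Module.AEval'.X_smul_of]
  refine ⟨Ψ.symm.conj (DirectSum.lmap j), fun x => ?_, fun x => Ψ.injective ?_⟩
  · simp only [LinearEquiv.conj_apply_apply, LinearEquiv.symm_symm, LinearEquiv.apply_symm_apply,
      LinearEquiv.symm_apply_eq]
    ext i
    simp only [DirectSum.lmap_apply, hj]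
  · simp only [LinearEquiv.conj_apply_apply, LinearEquiv.symm_symm, LinearEquiv.apply_symm_apply,
      hΨ]
    ext i
    simp only [DirectSum.lmap_apply, DirectSum.smul_apply, hXj]

/-- The companion matrix of `X ^ 2 - c * X + 1`, as an operator on `F × F`. -/
def companionBlock (c : F) : Module.End F (F × F) :=
  (-LinearMap.snd F F F).prod (LinearMap.fst F F F + c • LinearMap.snd F F F)

theorem isStronglyReversible_companionBlock (c : F) :
    IsStronglyReversible (companionBlock c) :=
  ⟨LinearEquiv.prodComm F F F, Prod.swap_swap, fun x => by simp [companionBlock, Prod.swap]⟩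

/-- Operators that are unipotent, or the direct sum of a unipotent operator and a single companion
block of `X ^ 2 - c * X + 1` with `c ≠ 2`, spanned by `v` and `A v`. The condition `c ≠ 2` says that
`1` is not an eigenvalue of the block. -/
def IsNearUnipotent (A : Module.End F V) : Prop :=
  IsNilpotent (A - 1) ∨ ∃ (v : V) (c : F) (k : ℕ), c ≠ 2 ∧ A (A v) = c • A v - v ∧
    LinearIndependent F ![v, A v] ∧ ∀ x, ∃ a b : F, ((A - 1) ^ k) (x - (a • v + b • A v)) = 0

section Block

variable {A : Module.End F V} {v : V} {c : F}

theorem eq_zero_of_sub_one_pow_apply_block_eq_zero (hc : c ≠ 2) (hv : A (A v) = c • A v - v)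
    (hind : LinearIndependent F ![v, A v]) (k : ℕ) {a b : F}
    (h : ((A - 1) ^ k) (a • v + b • A v) = 0) : a = 0 ∧ b = 0 := by
  rw [LinearIndependent.pair_iff] at hind
  induction k generalizing a b with
  | zero => exact hind a b h
  | succ k ih =>
    have hstep : (A - 1) (a • v + b • A v) = (-a - b) • v + (a + c * b - b) • A v := by
      simp only [LinearMap.sub_apply, map_add, map_smul, hv, Module.End.one_apply]
      module
    rw [pow_succ, Module.End.mul_apply, hstep] at h
    obtain ⟨h₁, h₂⟩ := ih h
    have hb : b = 0 :=
      (mul_eq_zero.1 (show (c - 2) * b = 0 by linear_combination h₁ + h₂)).resolve_left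
        (sub_ne_zero.2 hc)
    exact ⟨by linear_combination -h₁ - hb, hb⟩

theorem isNilpotent_restrict_sub_one {U : Submodule F V} (hU : ∀ x ∈ U, A x ∈ U) {k : ℕ}
    (h : U ≤ LinearMap.ker ((A - 1) ^ k)) : IsNilpotent (A.restrict hU - 1 : Module.End F U) := by
  have hpow (j : ℕ) (u : U) : (((A.restrict hU - 1) ^ j) u : V) = ((A - 1) ^ j) (u : V) := by
    induction j generalizing u with
    | zero => rfl
    | succ j ih => rw [pow_succ, pow_succ, Module.End.mul_apply, Module.End.mul_apply, ih]; rfl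
  exact ⟨k, LinearMap.ext fun u => Subtype.ext ((hpow k u).trans (h u.2))⟩

theorem IsStronglyReversible.of_block [FiniteDimensional F V] (hc : c ≠ 2)
    (hv : A (A v) = c • A v - v) (hind : LinearIndependent F ![v, A v]) {k : ℕ}
    (hx : ∀ x, ∃ a b : F, ((A - 1) ^ k) (x - (a • v + b • A v)) = 0) :
    IsStronglyReversible A := by
  let U := LinearMap.ker ((A - 1) ^ k)
  have hcomm : Commute ((A - 1) ^ k) A := ((Commute.refl A).sub_left (.one_left A)).pow_left k
  have hU : ∀ x ∈ U, A x ∈ U := fun x hx => by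
    rw [LinearMap.mem_ker] at hx ⊢
    rw [← Module.End.mul_apply, hcomm.eq, Module.End.mul_apply, hx, map_zero]
  let φ : (F × F) × U →ₗ[F] V :=
    ((LinearMap.toSpanSingleton F V v).coprod (LinearMap.toSpanSingleton F V (A v))).coprod
      U.subtype
  have hφ (a b : F) (u : U) : φ ((a, b), u) = a • v + b • A v + u := rfl
  have hinj : Function.Injective φ := by
    rw [← LinearMap.ker_eq_bot, LinearMap.ker_eq_bot']
    rintro ⟨⟨a, b⟩, u⟩ h
    rw [hφ] at h
    have hpow : ((A - 1) ^ k) (a • v + b • A v) = 0 := by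
      rw [eq_neg_of_add_eq_zero_left h, map_neg, LinearMap.mem_ker.1 u.2, neg_zero]
    obtain ⟨rfl, rfl⟩ := eq_zero_of_sub_one_pow_apply_block_eq_zero hc hv hind k hpow
    have hu : u = 0 := by simpa using h
    simp [hu]
  have hsurj : Function.Surjective φ := fun x => by
    obtain ⟨a, b, h⟩ := hx x
    exact ⟨((a, b), ⟨x - (a • v + b • A v), h⟩), by rw [hφ]; exact add_sub_cancel _ _⟩
  refine ((isStronglyReversible_companionBlock c).prodMap
    (.of_isNilpotent_sub_one (isNilpotent_restrict_sub_one hU le_rfl))).of_conj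
    (LinearEquiv.ofBijective φ ⟨hinj, hsurj⟩) ?_
  rintro ⟨⟨a, b⟩, u⟩
  change (-b) • v + (a + c * b) • A v + (A u : V) = A (a • v + b • A v + (u : V))
  simp only [map_add, map_smul, hv]
  module

end Block

theorem IsNearUnipotent.isStronglyReversible [FiniteDimensional F V] {A : Module.End F V}
    (hA : IsNearUnipotent A) : IsStronglyReversible A := by
  rcases hA with hA | ⟨v, c, k, hc, hv, hind, hx⟩
  · exact .of_isNilpotent_sub_one hA
  · exact .of_block hc hv hind hx

section Extension

variable {A : Module.End F V} {B : Module.End F W} {p : V →ₗ[F] W} {e : V}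

theorem sub_one_pow_succ_apply_eq_zero (hker : LinearMap.ker p ≤ F ∙ e) (hA : A e = e)
    (hAB : ∀ x, p (A x) = B (p x)) {k : ℕ} {x : V} (h : ((B - 1) ^ k) (p x) = 0) :
    ((A - 1) ^ (k + 1)) x = 0 := by
  have hpow : p (((A - 1) ^ k) x) = ((B - 1) ^ k) (p x) := by
    clear h
    induction k generalizing x with
    | zero => rfl
    | succ k ih => simp [pow_succ, ih, hAB]
  obtain ⟨s, hs⟩ := Submodule.mem_span_singleton.1 (hker (LinearMap.mem_ker.2 (hpow.trans h)))
  simp [pow_succ', ← hs, hA]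

/-- The block of `B` lifts to `A`: since `1` is not one of its eigenvalues, it can be corrected by
a multiple of the fixed vector `e`. -/
theorem IsNearUnipotent.of_quotient (hB : IsNearUnipotent B) (hp : Function.Surjective p)
    (hker : LinearMap.ker p = F ∙ e) (hA : A e = e) (hAB : ∀ x, p (A x) = B (p x)) :
    IsNearUnipotent A := by
  have hpe : p e = 0 := LinearMap.mem_ker.1 (hker ▸ Submodule.mem_span_singleton_self e)
  rcases hB with ⟨k, hk⟩ | ⟨w, c, k, hc, hw, hind, hx⟩
  · exact .inl ⟨k + 1, LinearMap.ext fun x =>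
      sub_one_pow_succ_apply_eq_zero hker.le hA hAB (by simp [hk])⟩
  obtain ⟨v, rfl⟩ := hp w
  obtain ⟨β, hβ⟩ : ∃ β : F, β • e = A (A v) - c • A v + v := by
    rw [← Submodule.mem_span_singleton, ← hker, LinearMap.mem_ker]
    simp [hAB, hw]
  have h2c : (2 : F) - c ≠ 0 := sub_ne_zero.2 hc.symm
  refine .inr ⟨v - (β / (2 - c)) • e, c, k + 1, hc, ?_, ?_, fun x => ?_⟩
  · have hAA : A (A v) = c • A v - v + (β / (2 - c) * (2 - c)) • e := by
      rw [div_mul_cancel₀ β h2c, hβ]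
      abel
    simp only [map_sub, map_smul, hA, hAA]
    module
  · rw [LinearIndependent.pair_iff] at hind ⊢
    exact fun a b h => hind a b (by simpa [hpe, hAB] using congrArg p h)
  · obtain ⟨a, b, h⟩ := hx (p x)
    exact ⟨a, b, sub_one_pow_succ_apply_eq_zero hker.le hA hAB (by simpa [hpe, hAB] using h)⟩

end Extension

end StrongReversibility

section NearUnipotentSlices

open Module

variable {F V W : Type*} [Field F] [AddCommGroup V] [Module F V] [AddCommGroup W] [Module F W]

/-- The square-zero operators with range contained in the line `F ∙ e`, that is the differences
`τ - 1` where `τ` is a transvection in the direction `e`. -/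
def rankOneNilpotent (F : Type*) {V : Type*} [Field F] [AddCommGroup V] [Module F V] (e : V) :
    Submodule F (End F V) :=
  (LinearMap.ker (Dual.eval F V e)).map (LinearMap.smulRightₗ.flip e)

theorem mem_rankOneNilpotent {e : V} {X : End F V} :
    X ∈ rankOneNilpotent F e ↔ ∃ f : Dual F V, f e = 0 ∧ f.smulRight e = X := by
  simp [rankOneNilpotent, LinearMap.smulRightₗ]

theorem finrank_rankOneNilpotent_add_one [FiniteDimensional F V] {e : V} (he : e ≠ 0) :
    finrank F (rankOneNilpotent F e) + 1 = finrank F V := by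
  have hinj : Function.Injective (LinearMap.smulRightₗ.flip e : Dual F V →ₗ[F] End F V) :=
    fun f g h => LinearMap.ext fun x => smul_left_injective F he (LinearMap.congr_fun h x)
  have hne : Dual.eval F V e ≠ 0 := fun h =>
    he ((forall_dual_apply_eq_zero_iff F e).1 fun f => LinearMap.congr_fun h f)
  rw [rankOneNilpotent, ← (Submodule.equivMapOfInjective _ hinj _).finrank_eq,
    Dual.finrank_ker_add_one_of_ne_zero hne, Subspace.dual_finrank_eq]

theorem finrank_map_add_finrank_inf_ker [FiniteDimensional F V] (κ : V →ₗ[F] W)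
    (U : Submodule F V) :
    finrank F (U.map κ) + finrank F (U ⊓ LinearMap.ker κ : Submodule F V) = finrank F U := by
  have h := LinearMap.finrank_range_add_finrank_ker (κ.domRestrict U)
  rw [LinearMap.range_domRestrict, LinearMap.ker_domRestrict] at h
  rw [← h, ← Submodule.map_comap_subtype, Submodule.finrank_map_subtype_eq]

/-- Every affine subspace of `End V` of codimension less than `dim V` contains a near unipotent
operator. This holds for all `V`; the name is needed for the induction on `dim V`. -/
def AffineMeetsNearUnipotent (F V : Type*) [Field F] [AddCommGroup V] [Module F V] : Prop :=
  ∀ (A₀ : End F V) (W : Submodule F (End F V)),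
    finrank F (End F V) < finrank F W + finrank F V → ∃ A, A - A₀ ∈ W ∧ IsNearUnipotent A

theorem AffineMeetsNearUnipotent.exists_of_quotient [FiniteDimensional F V] {e : V} (he : e ≠ 0)
    (hQ : AffineMeetsNearUnipotent F (V ⧸ F ∙ e)) {W : Submodule F (End F V)}
    (hW : ∀ X ∈ W, X e = 0) {A₀ : End F V} (hA₀ : A₀ e = e)
    (hdim : finrank F (W ⊓ rankOneNilpotent F e : Submodule F (End F V)) +
      finrank F (End F (V ⧸ F ∙ e)) < finrank F W + finrank F (V ⧸ F ∙ e)) :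
    ∃ A, A - A₀ ∈ W ∧ IsNearUnipotent A := by
  let p := (F ∙ e).mkQ
  have hpe : p e = 0 := by simp [p]
  have hker {y : V} (hy : p y = 0) : ∃ t : F, t • e = y :=
    Submodule.mem_span_singleton.1 ((Submodule.Quotient.mk_eq_zero _).1 hy)
  obtain ⟨s, hs⟩ := p.exists_rightInverse_of_surjective (Submodule.range_mkQ _)
  have hps (y : V ⧸ F ∙ e) : p (s y) = y := LinearMap.congr_fun hs y
  let κ : End F V →ₗ[F] End F (V ⧸ F ∙ e) :=
    LinearMap.compRight F p ∘ₗ LinearMap.lcomp F V s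
  have hκ {X : End F V} (hX : p (X e) = 0) (x : V) : κ X (p x) = p (X x) := by
    obtain ⟨t, ht⟩ : ∃ t : F, t • e = s (p x) - x := hker (by rw [map_sub, hps, sub_self])
    change p (X (s (p x))) = p (X x)
    rw [← sub_eq_zero, ← map_sub, ← map_sub, ← ht, map_smul, map_smul, hX, smul_zero]
  have hle : W ⊓ LinearMap.ker κ ≤ W ⊓ rankOneNilpotent F e := fun X ⟨hXW, hXκ⟩ => by
    obtain ⟨f, hf⟩ := Projective.exists_dual_eq_one F he
    refine ⟨hXW, mem_rankOneNilpotent.2 ⟨f ∘ₗ X, by simp [hW X hXW], LinearMap.ext fun x => ?_⟩⟩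
    obtain ⟨t, ht⟩ : ∃ t : F, t • e = X x := hker <| by
      rw [← hκ (by simp [hW X hXW]), LinearMap.mem_ker.1 hXκ, LinearMap.zero_apply]
    simp [← ht, hf]
  obtain ⟨B, ⟨X, hX, hXB⟩, hB⟩ := hQ (κ A₀) (W.map κ) (by
    have h₁ := finrank_map_add_finrank_inf_ker κ W
    have h₂ := Submodule.finrank_mono hle
    omega)
  have hAe : (A₀ + X) e = e := by simp [hA₀, hW X hX]
  refine ⟨A₀ + X, by simpa using hX,
    hB.of_quotient (Submodule.mkQ_surjective _) (Submodule.ker_mkQ _) hAe fun x => ?_⟩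
  rw [← hκ (by rw [hAe, hpe]), map_add, hXB, add_sub_cancel]

/-- If the exceptional vectors spanned `V`, those in a basis would yield `dim V` independent
conditions on `W`. -/
theorem exists_dual_forall_map_applyₗ_eq_top [FiniteDimensional F V] {W : Submodule F (End F V)}
    (hW : finrank F (End F V) < finrank F W + finrank F V) :
    ∃ h : Dual F V, h ≠ 0 ∧ ∀ e, h e ≠ 0 → W.map (LinearMap.applyₗ e) = ⊤ := by
  let s : Set V := {e | ∃ f : Dual F V, f ≠ 0 ∧ ∀ X ∈ W, f (X e) = 0}
  have hs {e : V} (he : e ∉ s) : W.map (LinearMap.applyₗ e) = ⊤ := by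
    by_contra hne
    obtain ⟨f, hf, hle⟩ := Submodule.exists_le_ker_of_lt_top _ (lt_top_iff_ne_top.2 hne)
    exact he ⟨f, hf, fun X hX => hle ⟨X, hX, rfl⟩⟩
  have hspan : Submodule.span F s ≠ ⊤ := fun htop => by
    let b := Basis.ofSpan htop.ge
    let := FiniteDimensional.fintypeBasisIndex b
    choose f hf₀ hf using fun i => Basis.ofSpan_subset htop.ge ⟨i, rfl⟩
    choose x hx using fun i => DFunLike.ne_iff.1 (hf₀ i)
    let Θ : End F V →ₗ[F] (_ → F) := LinearMap.pi fun i => f i ∘ₗ LinearMap.applyₗ (b i)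
    have hΘ : LinearMap.range Θ = ⊤ := LinearMap.range_eq_top.2 fun y =>
      ⟨b.constr F fun i => (y i / f i (x i)) • x i, funext fun i => by
        change f i (b.constr F _ (b i)) = y i
        rw [b.constr_basis, map_smul, smul_eq_mul, div_mul_cancel₀ _ (hx i)]⟩
    have hle : W ≤ LinearMap.ker Θ := fun X hX => LinearMap.mem_ker.2 (funext fun i => hf i X hX)
    have hrank := LinearMap.finrank_range_add_finrank_ker Θ
    rw [hΘ, finrank_top, finrank_fintype_fun_eq_card, ← finrank_eq_card_basis b] at hrank
    have := Submodule.finrank_mono hle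
    omega
  obtain ⟨h, hh, hle⟩ := Submodule.exists_le_ker_of_lt_top _ (lt_top_iff_ne_top.2 hspan)
  exact ⟨h, hh, fun e he => hs fun hes => he (hle (Submodule.subset_span hes))⟩

theorem exists_forall_apply_eq_apply_smulRight [FiniteDimensional F V] (l : Dual F (End F V)) :
    ∃ K : End F V, ∀ (f : Dual F V) x, f (K x) = l (f.smulRight x) :=
  ⟨(evalEquiv F V).symm ∘ₗ (LinearMap.smulRightₗ.flip).compr₂ l, fun f x => by
    simp [LinearMap.smulRightₗ]⟩

theorem eq_smul_trace_of_forall_smulRight [FiniteDimensional F V] {l : Dual F (End F V)} {c : F}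
    (h : ∀ (f : Dual F V) x, l (f.smulRight x) = c * f x) : l = c • LinearMap.trace F V := by
  ext X
  let b := finBasis F V
  have hX : X = ∑ i, (b.coord i).smulRight (X (b i)) := b.ext fun j => by
    simp [Finsupp.single_apply, LinearMap.sum_apply]
  rw [hX, map_sum, map_sum]
  simp [h, LinearMap.trace_smulRight]

theorem exists_eq_smul_one_of_apply_mem_span [FiniteDimensional F V] (hV : 3 ≤ finrank F V)
    {h : Dual F V} (hh : h ≠ 0) {K : End F V} (hK : ∀ x, h x ≠ 0 → ∃ a : F, a • x = K x) :
    ∃ c : F, K = c • 1 := by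
  obtain ⟨e, he⟩ : ∃ e, h e ≠ 0 := DFunLike.ne_iff.1 hh
  obtain ⟨c, hc⟩ := hK e he
  have hker (x : LinearMap.ker h) : K x = c • x := by
    rcases eq_or_ne x 0 with rfl | hx
    · simp
    have hrank : 1 < finrank F (LinearMap.ker h) := by
      have := Dual.finrank_ker_add_one_of_ne_zero hh
      omega
    obtain ⟨y, hxy⟩ := exists_linearIndependent_pair_of_one_lt_finrank hrank hx
    obtain ⟨a₁, h₁⟩ := hK (e + x) (by simpa using he)
    obtain ⟨a₂, h₂⟩ := hK (e + y) (by simpa using he)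
    obtain ⟨a₃, h₃⟩ := hK (e + x + y) (by simpa using he)
    simp only [map_add, ← hc] at h₁ h₂ h₃
    have hrel : (a₁ + a₂ - a₃ - c) • e +
        (((a₁ - a₃) • x + (a₂ - a₃) • y : LinearMap.ker h) : V) = 0 := by
      push_cast
      linear_combination (norm := module) h₁ + h₂ - h₃
    have hsum : a₁ + a₂ - a₃ - c = 0 := by simpa [he] using congrArg h hrel
    rw [hsum, zero_smul, zero_add] at hrel
    obtain ⟨h₁₃, h₂₃⟩ := LinearIndependent.pair_iff.1 hxy _ _ (Subtype.ext hrel)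
    rw [show a₁ = c by linear_combination hsum - h₂₃, smul_add] at h₁
    exact (add_left_cancel h₁).symm
  refine ⟨c, LinearMap.ext fun x => ?_⟩
  have hx := hker ⟨x - (h x / h e) • e, by simp [he]⟩
  simp only [map_sub, map_smul, ← hc] at hx
  rw [LinearMap.smul_apply, End.one_apply]
  linear_combination (norm := module) hx

theorem exists_smul_eq_of_forall_dual {x y : V} (h : ∀ f : Dual F V, f x = 0 → f y = 0) :
    ∃ a : F, a • x = y := by
  rw [← Submodule.mem_span_singleton]
  by_contra hy
  obtain ⟨f, hfy, hf⟩ := Submodule.exists_le_ker_of_notMem hy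
  exact hfy (h f (hf (Submodule.mem_span_singleton_self x)))

theorem exists_not_rankOneNilpotent_le [FiniteDimensional F V] (hV : 3 ≤ finrank F V)
    {h : Dual F V} (hh : h ≠ 0) {W : Submodule F (End F V)}
    (hW : finrank F W + 1 < finrank F (End F V)) :
    ∃ e, h e ≠ 0 ∧ ¬ rankOneNilpotent F e ≤ W := by
  by_contra! hle
  have hann : W.dualAnnihilator ≤ F ∙ LinearMap.trace F V := fun l hl => by
    obtain ⟨K, hK⟩ := exists_forall_apply_eq_apply_smulRight l
    obtain ⟨c, rfl⟩ := exists_eq_smul_one_of_apply_mem_span hV hh (K := K) fun x hx =>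
      exists_smul_eq_of_forall_dual fun f hf => by
        rw [hK]
        exact (Submodule.mem_dualAnnihilator _).1 hl _
          (hle x hx (mem_rankOneNilpotent.2 ⟨f, hf, rfl⟩))
    exact Submodule.mem_span_singleton.2
      ⟨c, (eq_smul_trace_of_forall_smulRight fun f x => by simp [← hK]).symm⟩
  have h₁ := Subspace.finrank_add_finrank_dualAnnihilator_eq W
  have h₂ := (Submodule.finrank_mono hann).trans
    (finrank_span_le_card {LinearMap.trace F V})
  rw [Set.toFinset_singleton, Finset.card_singleton] at h₂
  omega

theorem exists_isNearUnipotent_trace_eq (hV : finrank F V = 2) (c : F) :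
    ∃ A : End F V, IsNearUnipotent A ∧ LinearMap.trace F V A = c := by
  have : FiniteDimensional F V := .of_finrank_pos (by omega)
  let b := finBasisOfFinrankEq F V hV
  let A := b.constr F ![b 1, c • b 1 - b 0]
  have h₀ : A (b 0) = b 1 := by simp [A]
  have h₁ : A (b 1) = c • b 1 - b 0 := by simp [A]
  refine ⟨A, ?_, ?_⟩
  · by_cases hc : c = 2
    · refine .inl ⟨2, b.ext fun i => ?_⟩
      fin_cases i <;> simp [pow_two, h₀, h₁, hc, two_smul] <;> abel
    · refine .inr ⟨b 0, c, 0, hc, by rw [h₀, h₁], ?_, fun x => ⟨b.repr x 0, b.repr x 1, ?_⟩⟩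
      · rw [h₀]
        convert b.linearIndependent
        ext i; fin_cases i <;> rfl
      · have := b.sum_repr x
        rw [Fin.sum_univ_two] at this
        simp [h₀, this]
  · rw [LinearMap.trace_eq_matrix_trace F b, Matrix.trace_fin_two]
    simp [LinearMap.toMatrix_apply, h₀, h₁]

theorem affineMeetsNearUnipotent_of_finrank_eq_two (hV : finrank F V = 2) :
    AffineMeetsNearUnipotent F V := fun A₀ W hW => by
  have : FiniteDimensional F V := .of_finrank_pos (by omega)
  by_cases htop : W = ⊤
  · exact ⟨1, by simp [htop], .inl (by simp)⟩
  obtain ⟨l, hl₀, hle⟩ := Submodule.exists_le_ker_of_lt_top _ (lt_top_iff_ne_top.2 htop)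
  have hWl : W = LinearMap.ker l := Submodule.eq_of_le_of_finrank_le hle (by
    have := Dual.finrank_ker_add_one_of_ne_zero hl₀
    omega)
  suffices ∃ A, IsNearUnipotent A ∧ l A = l A₀ by
    obtain ⟨A, hA, hl⟩ := this
    exact ⟨A, by simp [hWl, hl], hA⟩
  by_cases hN : ∃ N : End F V, N * N = 0 ∧ l N ≠ 0
  · obtain ⟨N, hN, hlN⟩ := hN
    exact ⟨1 + ((l A₀ - l 1) / l N) • N, .inl ⟨2, by simp [pow_two, hN]⟩, by simp [hlN]⟩
  push Not at hN
  obtain ⟨K, hK⟩ := exists_forall_apply_eq_apply_smulRight l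
  have hKx (x : V) : ¬ LinearIndependent F ![x, K x] := fun hx => by
    obtain ⟨a, ha⟩ : ∃ a : F, a • x = K x := exists_smul_eq_of_forall_dual fun f hf => by
      rw [hK]
      exact hN _ (LinearMap.ext fun y => by simp [hf])
    simpa using LinearIndependent.pair_iff.1 hx a (-1) (by simp [ha])
  obtain ⟨d, rfl⟩ := LinearMap.exists_eq_smul_id_of_forall_notLinearIndependent hKx
  obtain rfl := eq_smul_trace_of_forall_smulRight (l := l) (c := d) fun f x => by simp [← hK]
  obtain ⟨A, hA, htr⟩ := exists_isNearUnipotent_trace_eq hV (LinearMap.trace F V A₀)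
  exact ⟨A, hA, by simp [htr]⟩

theorem exists_finrank_inf_rankOneNilpotent_le [FiniteDimensional F V] {m : ℕ} (hm : 2 ≤ m)
    (hV : finrank F V = m + 1) {h : Dual F V} (hh : h ≠ 0) {W : Submodule F (End F V)}
    (hW : finrank F (End F V) < finrank F W + finrank F V) :
    ∃ e, h e ≠ 0 ∧
      finrank F (W ⊓ rankOneNilpotent F e : Submodule F (End F V)) + m * m + 2 ≤ finrank F W := by
  have hEnd : finrank F (End F V) = (m + 1) * (m + 1) := by rw [finrank_linearMap, hV]
  have hsq : (m + 1) * (m + 1) = m * m + 2 * m + 1 := by ring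
  by_cases hbig : m * m + m + 2 ≤ finrank F W
  · obtain ⟨e, he⟩ : ∃ e, h e ≠ 0 := DFunLike.ne_iff.1 hh
    have h₁ := finrank_rankOneNilpotent_add_one (F := F) (e := e) (by rintro rfl; simp at he)
    have h₂ := Submodule.finrank_mono (inf_le_right : W ⊓ rankOneNilpotent F e ≤ _)
    exact ⟨e, he, by omega⟩
  · obtain ⟨e, he, hle⟩ := exists_not_rankOneNilpotent_le (by omega) hh (W := W) (by omega)
    have h₁ := finrank_rankOneNilpotent_add_one (F := F) (e := e) (by rintro rfl; simp at he)
    have h₂ := Submodule.finrank_lt_finrank_of_lt (inf_lt_right.2 hle)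
    exact ⟨e, he, by omega⟩

theorem AffineMeetsNearUnipotent.of_quotient [FiniteDimensional F V] {m : ℕ} (hm : 2 ≤ m)
    (hV : finrank F V = m + 1)
    (hQ : ∀ e : V, e ≠ 0 → AffineMeetsNearUnipotent F (V ⧸ F ∙ e)) :
    AffineMeetsNearUnipotent F V := fun A₀ W hW => by
  obtain ⟨h, hh, hsurj⟩ := exists_dual_forall_map_applyₗ_eq_top hW
  obtain ⟨e, he, hdim⟩ := exists_finrank_inf_rankOneNilpotent_le hm hV hh hW
  have he₀ : e ≠ 0 := by rintro rfl; simp at he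
  obtain ⟨X, hX, hXe⟩ : e - A₀ e ∈ W.map (LinearMap.applyₗ e) := hsurj e he ▸ Submodule.mem_top
  let W₁ := W ⊓ LinearMap.ker (LinearMap.applyₗ e : End F V →ₗ[F] V)
  obtain ⟨A, hA, hAu⟩ := (hQ e he₀).exists_of_quotient he₀ (W := W₁) (fun X hX => hX.2)
    (A₀ := A₀ + X) (by rw [LinearMap.add_apply]; exact (congrArg _ hXe).trans (by abel)) (by
      have h₁ := finrank_map_add_finrank_inf_ker (LinearMap.applyₗ e : End F V →ₗ[F] V) W
      have h₂ : finrank F (W₁ ⊓ rankOneNilpotent F e : Submodule F (End F V)) ≤ _ :=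
        Submodule.finrank_mono (inf_le_inf_right _ inf_le_left)
      have h₃ := Submodule.finrank_quotient_add_finrank (F ∙ e)
      rw [finrank_span_singleton he₀, hV] at h₃
      rw [hsurj e he, finrank_top, hV] at h₁
      rw [finrank_linearMap, show finrank F (V ⧸ F ∙ e) = m by omega]
      change m + 1 + finrank F W₁ = finrank F W at h₁
      omega)
  exact ⟨A, by simpa [← sub_sub] using W.add_mem hA.1 hX, hAu⟩

theorem affineMeetsNearUnipotent [FiniteDimensional F V] : AffineMeetsNearUnipotent F V := by
  induction hV : finrank F V using Nat.strong_induction_on generalizing V with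
  | _ n ih =>
  rcases lt_trichotomy n 2 with hn | rfl | hn
  · intro A₀ W hW
    have hle := Submodule.finrank_le W
    have htop : W = ⊤ := Submodule.eq_top_of_finrank_eq (by
      rw [finrank_linearMap, hV] at *
      interval_cases n <;> omega)
    exact ⟨1, by simp [htop], .inl (by simp)⟩
  · exact affineMeetsNearUnipotent_of_finrank_eq_two hV
  · refine .of_quotient (m := n - 1) (by omega) (by omega) fun e he => ih (n - 1) (by omega) ?_
    have := Submodule.finrank_quotient_add_finrank (F ∙ e)
    rw [finrank_span_singleton he] at this
    omega

end NearUnipotentSlices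

section RankOnePencils

open Module

variable {F V W P : Type*} [Field F] [AddCommGroup V] [Module F V] [AddCommGroup W] [Module F W]
  [AddCommGroup P] [Module F P]

/-- Linear maps of rank at most one. -/
def IsRankLEOne (a : W →ₗ[F] V) : Prop :=
  ∃ (l : Dual F W) (z : V), a = l.smulRight z

theorem isRankLEOne_of_forall_mem_span {a : W →ₗ[F] V} {z : V} (h : ∀ w, a w ∈ F ∙ z) :
    IsRankLEOne a := by
  rcases eq_or_ne z 0 with rfl | hz
  · exact ⟨0, 0, LinearMap.ext fun w => by simpa using h w⟩
  obtain ⟨f, hf⟩ := Projective.exists_dual_eq_one F hz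
  refine ⟨f ∘ₗ a, z, LinearMap.ext fun w => ?_⟩
  obtain ⟨c, hc⟩ := Submodule.mem_span_singleton.1 (h w)
  simp [← hc, hf]

theorem IsRankLEOne.apply_mem_span {a : W →ₗ[F] V} (ha : IsRankLEOne a) {w : W} (hw : a w ≠ 0)
    (x : W) : a x ∈ F ∙ a w := by
  obtain ⟨l, z, rfl⟩ := ha
  have hlw : l w ≠ 0 := fun h => hw (by simp [h])
  exact Submodule.mem_span_singleton.2 ⟨l x / l w, by simp [smul_smul, hlw]⟩

theorem IsRankLEOne.mem_span_of_add {l l' : Dual F W} {z z' : V} {c : F} {w : W} (hc : c ≠ 0)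
    (h : IsRankLEOne (l.smulRight z + c • l'.smulRight z')) (hl : l.smulRight z ≠ 0)
    (hw : l w = 0) (hw' : l' w ≠ 0) : z' ∈ F ∙ z := by
  obtain ⟨x, hx⟩ := DFunLike.ne_iff.1 hl
  let x' := x - (l' x / l' w) • w
  have hx' : (l.smulRight z + c • l'.smulRight z') x' = l x • z := by simp [x', hw, hw']
  have hz' : c • l' w • z' ∈ F ∙ (l x • z) := by
    simpa [hx', hw] using h.apply_mem_span (w := x') (by rw [hx']; simpa using hx) w
  rw [smul_smul, Submodule.smul_mem_iff _ (mul_ne_zero hc hw')] at hz'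
  exact (Submodule.span_singleton_smul_le F (l x) z) hz'

theorem exists_mem_span_or_exists_ker_le_of_pairwise {S : Set (W →ₗ[F] V)}
    (h₁ : ∀ a ∈ S, IsRankLEOne a)
    (h₂ : S.Pairwise fun a b => ∃ c : F, c ≠ 0 ∧ IsRankLEOne (a + c • b)) :
    (∃ z : V, ∀ a ∈ S, ∀ w, a w ∈ F ∙ z) ∨
      ∃ l : Dual F W, ∀ a ∈ S, ∀ w, l w = 0 → a w = 0 := by
  by_cases h₀ : ∀ a ∈ S, a = 0
  · exact Or.inl ⟨0, fun a ha w => by simp [h₀ a ha]⟩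
  push Not at h₀
  obtain ⟨a₀, ha₀, hne⟩ := h₀
  obtain ⟨l₀, z₀, rfl⟩ := h₁ a₀ ha₀
  by_contra! hcon
  obtain ⟨⟨a₁, ha₁, w₁, hw₁⟩, ⟨a₂, ha₂, w₂, hw₂, hw₂'⟩⟩ := hcon.imp (· z₀) (· l₀)
  obtain ⟨l₁, z₁, rfl⟩ := h₁ a₁ ha₁
  obtain ⟨l₂, z₂, rfl⟩ := h₁ a₂ ha₂
  obtain ⟨hl₂, hz₂⟩ : l₂ w₂ ≠ 0 ∧ z₂ ≠ 0 := by simpa using hw₂'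
  have hz₁ : z₁ ∉ F ∙ z₀ := fun h => hw₁ (Submodule.smul_mem _ _ h)
  have hl₁ : l₁ w₂ = 0 := by
    by_contra hl₁
    obtain ⟨c, hc, hr⟩ := h₂ ha₀ ha₁ fun h => hw₁ <| h ▸
      Submodule.smul_mem _ _ (Submodule.mem_span_singleton_self z₀)
    exact hz₁ (hr.mem_span_of_add hc hne hw₂ hl₁)
  obtain ⟨c, hc, hr⟩ := h₂ ha₀ ha₂ fun h => hw₂' (by simp [← h, hw₂])
  have h₀₂ := hr.mem_span_of_add hc hne hw₂ hl₂
  obtain ⟨c, hc, hr⟩ := h₂ ha₁ ha₂ fun h => hw₂' (by simp [← h, hl₁])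
  have h₁₂ := hr.mem_span_of_add hc (fun h => hw₁ (by simp [h])) hl₁ hl₂
  obtain ⟨d, rfl⟩ := Submodule.mem_span_singleton.1 h₁₂
  have hd : d ≠ 0 := by rintro rfl; simp at hz₂
  exact hz₁ ((Submodule.smul_mem_iff _ hd).1 h₀₂)

theorem exists_forall_apply_mem_span_of_pairwise {a : P →ₗ[F] W →ₗ[F] V}
    (hW : 2 ≤ finrank F W) (ha : ∀ w, (∀ v, a v w = 0) → w = 0) {B : Set P}
    (hB : Submodule.span F B = ⊤) (h₁ : ∀ b ∈ B, IsRankLEOne (a b))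
    (h₂ : B.Pairwise fun b b' => ∃ c : F, c ≠ 0 ∧ IsRankLEOne (a (b + c • b'))) :
    ∃ z : V, ∀ v w, a v w ∈ F ∙ z := by
  have := FiniteDimensional.of_finrank_pos (K := F) (V := W) (by omega)
  have hpair : (a '' B).Pairwise fun x y => ∃ c : F, c ≠ 0 ∧ IsRankLEOne (x + c • y) := by
    rintro _ ⟨b, hb, rfl⟩ _ ⟨b', hb', rfl⟩ hne
    simpa using h₂ hb hb' fun h => hne (by rw [h])
  rcases exists_mem_span_or_exists_ker_le_of_pairwise (Set.forall_mem_image.2 h₁) hpair with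
    ⟨z, hz⟩ | ⟨l, hl⟩
  · refine ⟨z, fun v w => ?_⟩
    have hle : Submodule.span F B ≤ (F ∙ z).comap (a.flip w) :=
      Submodule.span_le.2 fun b hb => hz _ ⟨b, hb, rfl⟩ w
    exact (hB ▸ hle) Submodule.mem_top
  · obtain ⟨w, hw, hw₀⟩ := Submodule.exists_mem_ne_zero_of_ne_bot
      (LinearMap.ker_ne_bot_of_finrank_lt (f := l) (by rw [finrank_self]; omega))
    have hflip : a.flip w = 0 := LinearMap.ext_on hB fun b hb => hl _ ⟨b, hb, rfl⟩ w hw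
    exact absurd (ha w fun v => LinearMap.congr_fun hflip v) hw₀

theorem span_setOf_apply_ne_zero {h : Dual F P} (hh : h ≠ 0) :
    Submodule.span F {b | h b ≠ 0} = ⊤ := by
  obtain ⟨b, hb⟩ := DFunLike.ne_iff.1 hh
  refine Submodule.eq_top_iff'.2 fun x => ?_
  by_cases hx : h x = 0
  · rw [← add_sub_cancel_right x b]
    exact Submodule.sub_mem _ (Submodule.subset_span (by simpa [hx] using hb))
      (Submodule.subset_span hb)
  · exact Submodule.subset_span hx

theorem isRankLEOne_apply_add_of_forall_eq_one {a : P →ₗ[F] W →ₗ[F] V} (hW : 3 ≤ finrank F W)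
    (ha : ∀ w, (∀ v, a v w = 0) → w = 0) (hF : ∀ c : F, c ≠ 0 → c = 1) {h : Dual F P}
    (hr : ∀ b, h b ≠ 0 → IsRankLEOne (a b)) {b b' : P} (hb : h b ≠ 0) (hb' : h b' ≠ 0) :
    IsRankLEOne (a (b + b')) := by
  have := FiniteDimensional.of_finrank_pos (K := F) (V := W) (by omega)
  have h₂ : (2 : F) = 0 := by
    by_contra h₂
    exact one_ne_zero (show (1 : F) = 0 by linear_combination hF 2 h₂)
  obtain ⟨l, z, hl⟩ := hr b hb
  obtain ⟨l', z', hl'⟩ := hr b' hb'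
  obtain ⟨w, hw, hw₀⟩ := Submodule.exists_mem_ne_zero_of_ne_bot
    (LinearMap.ker_ne_bot_of_finrank_lt (f := l.prod l')
      (by rw [finrank_prod, finrank_self]; omega))
  obtain ⟨hlw, hlw'⟩ : l w = 0 ∧ l' w = 0 := by simpa using hw
  obtain ⟨b₃, hb₃, hbw⟩ : ∃ b₃, h b₃ ≠ 0 ∧ a b₃ w ≠ 0 := by
    by_contra! hcon
    have hflip : a.flip w = 0 := LinearMap.ext_on
      (span_setOf_apply_ne_zero fun h₀ => hb (by simp [h₀])) hcon
    exact hw₀ (ha w fun v => LinearMap.congr_fun hflip v)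
  have hsum : h (b + b' + b₃) ≠ 0 := by
    simp only [map_add, hF _ hb, hF _ hb', hF _ hb₃]
    exact fun h₃ => one_ne_zero (show (1 : F) = 0 by linear_combination h₃ - h₂)
  have hsum_w : a (b + b' + b₃) w = a b₃ w := by simp [hl, hl', hlw, hlw']
  refine isRankLEOne_of_forall_mem_span (z := a b₃ w) fun x => ?_
  have hx : a (b + b') x = a (b + b' + b₃) x - a b₃ x := by simp
  rw [hx]
  exact Submodule.sub_mem _
    (hsum_w ▸ (hr _ hsum).apply_mem_span (by rwa [hsum_w]) x) ((hr _ hb₃).apply_mem_span hbw x)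

theorem exists_forall_apply_mem_span_of_dual {a : P →ₗ[F] W →ₗ[F] V} (hW : 2 ≤ finrank F W)
    (hF : (∃ c : F, c ≠ 0 ∧ c ≠ 1) ∨ 3 ≤ finrank F W) (ha : ∀ w, (∀ v, a v w = 0) → w = 0)
    {h : Dual F P} (hh : h ≠ 0) (hr : ∀ b, h b ≠ 0 → IsRankLEOne (a b)) :
    ∃ z : V, ∀ v w, a v w ∈ F ∙ z := by
  refine exists_forall_apply_mem_span_of_pairwise hW ha (span_setOf_apply_ne_zero hh) hr
    fun b (hb : h b ≠ 0) b' (hb' : h b' ≠ 0) _ => ?_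
  by_cases hF₂ : ∃ c : F, c ≠ 0 ∧ c ≠ 1
  · obtain ⟨c, hc₀, hc₁⟩ := hF₂
    refine ⟨-c * (h b / h b'), by simp [hc₀, hb, hb'], hr _ ?_⟩
    have heq : h (b + (-c * (h b / h b')) • b') = (1 - c) * h b := by
      rw [map_add, map_smul, smul_eq_mul]
      field_simp
      ring
    exact heq ▸ mul_ne_zero (sub_ne_zero.2 hc₁.symm) hb
  · refine ⟨1, one_ne_zero, ?_⟩
    rw [one_smul]
    exact isRankLEOne_apply_add_of_forall_eq_one (hF.resolve_left hF₂) ha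
      (by simpa [not_exists, not_and, not_not] using hF₂) hr hb hb'

theorem exists_pair_ne_zero_sum_ne_zero {n : ℕ} (hn : 3 ≤ n)
    (hF : (∃ c : F, c ≠ 0 ∧ c ≠ 1) ∨ 4 ≤ n) :
    ∃ (i j k : Fin n) (u : Fin n → F), j ≠ i ∧ k ≠ i ∧ j ≠ k ∧ u i = 0 ∧ u j ≠ 0 ∧ u k ≠ 0 ∧
      ∑ m, u m ≠ 0 := by
  rcases hF with ⟨c, hc₀, hc₁⟩ | hn₄
  · let f : Fin 3 ↪ Fin n := Fin.castLEEmb hn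
    refine ⟨f 0, f 1, f 2, Pi.single (f 1) 1 + Pi.single (f 2) (-c), ?_⟩
    simpa [Pi.single_apply, Finset.sum_add_distrib, hc₀, ← sub_eq_add_neg, sub_eq_zero]
      using hc₁.symm
  · let f : Fin 4 ↪ Fin n := Fin.castLEEmb hn₄
    refine ⟨f 0, f 1, f 2, Pi.single (f 1) 1 + Pi.single (f 2) 1 - Pi.single (f 3) 1, ?_⟩
    simp [Pi.single_apply, Finset.sum_add_distrib]

theorem span_insert_sum_smul_eq_top {n : ℕ} (b : Basis (Fin n) F P) {i : Fin n} {u : Fin n → F}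
    (hui : u i = 0) (hsum : ∑ m, u m ≠ 0) :
    Submodule.span F (insert (∑ m, u m • b m) {y | ∃ l, l ≠ i ∧ b l + b i = y}) = ⊤ := by
  set B : Set P := insert (∑ m, u m • b m) {y | ∃ l, l ≠ i ∧ b l + b i = y}
  have hmem (l : Fin n) (hl : l ≠ i) : b l + b i ∈ Submodule.span F B :=
    Submodule.subset_span (Or.inr ⟨l, hl, rfl⟩)
  have hbi : b i ∈ Submodule.span F B := by
    have hi : (∑ m, u m) • b i = ∑ m, u m • (b m + b i) - ∑ m, u m • b m := by
      simp [smul_add, Finset.sum_add_distrib, Finset.sum_smul]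
    rw [← Submodule.smul_mem_iff _ hsum, hi]
    refine Submodule.sub_mem _ (Submodule.sum_mem _ fun m _ => ?_)
      (Submodule.subset_span (Or.inl rfl))
    rcases eq_or_ne m i with rfl | hm
    · simp [hui]
    · exact Submodule.smul_mem _ _ (hmem m hm)
  refine top_le_iff.1 (b.span_eq ▸ Submodule.span_le.2 ?_)
  rintro _ ⟨l, rfl⟩
  rcases eq_or_ne l i with rfl | hl
  · exact hbi
  · exact (Submodule.add_mem_iff_left _ hbi).1 (hmem l hl)

theorem exists_forall_apply_mem_span_of_basis {a : P →ₗ[F] W →ₗ[F] V} {n : ℕ} (hn : 3 ≤ n)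
    (hF : (∃ c : F, c ≠ 0 ∧ c ≠ 1) ∨ 4 ≤ n) (hW : 2 ≤ finrank F W)
    (ha : ∀ w, (∀ v, a v w = 0) → w = 0) (b : Basis (Fin n) F P)
    (hr : ∀ v i j, i ≠ j → b.coord i v ≠ 0 → b.coord j v ≠ 0 → IsRankLEOne (a v)) :
    ∃ z : V, ∀ v w, a v w ∈ F ∙ z := by
  obtain ⟨i, j, k, u, hj, hk, hjk, hui, huj, huk, hsum⟩ := exists_pair_ne_zero_sum_ne_zero hn hF
  let x : P := ∑ m, u m • b m
  have hx m : b.coord m x = u m := by simp [x, Finsupp.single_apply]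
  have hb (l m : Fin n) : b.coord m (b l) = if l = m then 1 else 0 := by
    simp [Finsupp.single_apply]
  have hhub (l : Fin n) (hl : l ≠ i) : IsRankLEOne (a (b l + b i + x)) := by
    obtain ⟨m, hmi, hml, hum⟩ : ∃ m, m ≠ i ∧ m ≠ l ∧ u m ≠ 0 := by
      by_cases hlj : l = j
      · exact ⟨k, hk, hlj ▸ hjk.symm, huk⟩
      · exact ⟨j, hj, Ne.symm hlj, huj⟩
    refine hr _ i m hmi.symm ?_ ?_ <;>
      simp only [map_add, hx, hb, hui, hl, hmi.symm, hml.symm, if_true, if_false] <;> simp [hum]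
  have hB := span_insert_sum_smul_eq_top b hui hsum
  refine exists_forall_apply_mem_span_of_pairwise hW ha hB ?_ fun y hy y' hy' hne =>
      ⟨1, one_ne_zero, ?_⟩
  · rintro _ (rfl | ⟨l, hl, rfl⟩)
    · exact hr x j k hjk (by rwa [hx]) (by rwa [hx])
    · exact hr _ l i hl (by simp [hl.symm]) (by simp [hl])
  · rw [one_smul]
    rcases hy with rfl | ⟨l, hl, rfl⟩ <;> rcases hy' with rfl | ⟨l', hl', rfl⟩
    · exact absurd rfl hne
    · rw [add_comm]
      exact hhub l' hl'
    · exact hhub l hl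
    · have hll : l ≠ l' := fun h => hne (by rw [h])
      exact hr _ l l' hll (by simp [hl.symm, hll.symm]) (by simp [hl'.symm, hll])

end RankOnePencils

section AnnihilatorImages

open Module

variable {F V P Q : Type*} [Field F] [AddCommGroup V] [Module F V] [AddCommGroup P] [Module F P]
  [AddCommGroup Q] [Module F Q]

theorem finrank_ker_applyₗ_add [FiniteDimensional F V] {e : V} (he : e ≠ 0) :
    finrank F (LinearMap.ker (LinearMap.applyₗ e : End F V →ₗ[F] V)) + finrank F V =
      finrank F (End F V) := by
  have hsurj : Function.Surjective (LinearMap.applyₗ e : End F V →ₗ[F] V) := fun x => by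
    obtain ⟨f, hf⟩ := Projective.exists_dual_eq_one F he
    exact ⟨f.smulRight x, by simp [hf]⟩
  rw [← LinearMap.finrank_range_add_finrank_ker (LinearMap.applyₗ e : End F V →ₗ[F] V),
    LinearMap.range_eq_top.2 hsurj, finrank_top, add_comm]

theorem finrank_map_rankOneNilpotent_le_one [FiniteDimensional F V] [FiniteDimensional F Q]
    (hQ : finrank F Q ≤ finrank F V) {ψ : End F V →ₗ[F] Q} (hψ : ∀ A, IsNearUnipotent A → ψ A ≠ 0)
    {e : V} (he : e ≠ 0) {X₀ : End F V} (hX₀ : X₀ e = 0) (h : ψ X₀ = ψ 1) :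
    finrank F ((rankOneNilpotent F e).map ψ) ≤ 1 := by
  by_contra! hlt
  let L : Submodule F (End F V) := LinearMap.ker (LinearMap.applyₗ e)
  obtain ⟨A, hA, hAu⟩ := (affineMeetsNearUnipotent (F := F) (V := V ⧸ F ∙ e)).exists_of_quotient he
    (W := L ⊓ LinearMap.ker ψ) (fun X hX => hX.1) (A₀ := 1 - X₀) (by simp [hX₀]) (by
      have h₁ : finrank F L + _ = _ := finrank_ker_applyₗ_add he
      have h₂ := finrank_map_add_finrank_inf_ker ψ L
      have h₃ := finrank_map_add_finrank_inf_ker ψ (rankOneNilpotent F e)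
      have h₄ := finrank_rankOneNilpotent_add_one (F := F) he
      have h₅ := Submodule.finrank_le (L.map ψ)
      have h₆ : finrank F (L ⊓ LinearMap.ker ψ ⊓ rankOneNilpotent F e : Submodule F (End F V)) ≤
          finrank F (rankOneNilpotent F e ⊓ LinearMap.ker ψ : Submodule F (End F V)) :=
        Submodule.finrank_mono (le_inf inf_le_right (inf_le_left.trans inf_le_right))
      obtain ⟨m, hm⟩ : ∃ m, finrank F (V ⧸ F ∙ e) = m := ⟨_, rfl⟩
      have h₇ := Submodule.finrank_quotient_add_finrank (F ∙ e)
      rw [finrank_span_singleton he, hm] at h₇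
      rw [finrank_linearMap, ← h₇] at h₁
      rw [finrank_linearMap, hm]
      have hsq : (m + 1) * (m + 1) = m * m + 2 * m + 1 := by ring
      omega)
  have hker : ψ (A - (1 - X₀)) = 0 := hA.2
  exact hψ A hAu (by simpa [h] using hker)

/-- The functional `f` and the vector `v` witness that `T 1 v` is not of the form `T X v` with
`X e = 0`. The vectors `v` without such a partner `f` are those for which
`finrank_map_rankOneNilpotent_le_one` applies to `T · v`. -/
def IsActivePair (T : End F V →ₗ[F] P →ₗ[F] Q) (e : V) (f : Dual F Q) (v : P) : Prop :=
  (∀ X : End F V, X e = 0 → f (T X v) = 0) ∧ f (T 1 v) ≠ 0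

variable {T : End F V →ₗ[F] P →ₗ[F] Q} {e : V}

theorem isRankLEOne_of_forall_not_isActivePair [FiniteDimensional F V] [FiniteDimensional F Q]
    (hQ : finrank F Q ≤ finrank F V) (hT : ∀ A, IsNearUnipotent A → Function.Injective (T A))
    (he : e ≠ 0) {v : P} (hv : ∀ f, ¬ IsActivePair T e f v) :
    IsRankLEOne ((T ∘ₗ (rankOneNilpotent F e).subtype).flip v) := by
  rcases eq_or_ne v 0 with rfl | hv₀
  · exact isRankLEOne_of_forall_mem_span (z := 0) (by simp)
  have hmem : T 1 v ∈ (LinearMap.ker (LinearMap.applyₗ e)).map (T.flip v) := by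
    by_contra hnot
    obtain ⟨f, hf, hle⟩ := Submodule.exists_le_ker_of_notMem hnot
    exact hv f ⟨fun X hX => hle ⟨X, hX, rfl⟩, hf⟩
  obtain ⟨X₀, hX₀, hX₀v⟩ := hmem
  have hle := finrank_map_rankOneNilpotent_le_one hQ (ψ := T.flip v)
    (fun A hA => (map_ne_zero_iff _ (hT A hA)).2 hv₀) he hX₀ hX₀v
  obtain ⟨z, hz⟩ := finrank_le_one_iff.1 hle
  refine isRankLEOne_of_forall_mem_span (z := (z : Q)) fun X => ?_
  obtain ⟨c, hc⟩ := hz ⟨T X v, X, X.2, rfl⟩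
  exact Submodule.mem_span_singleton.2 ⟨c, congrArg Subtype.val hc⟩

theorem finrank_le_one_of_isRankLEOne_of_injective {W : Type*} [AddCommGroup W] [Module F W]
    {a : W →ₗ[F] Q} (ha : IsRankLEOne a) (hinj : Function.Injective a) : finrank F W ≤ 1 := by
  obtain ⟨l, z, rfl⟩ := ha
  have hl : Function.Injective l := fun x y hxy => hinj (by simp [hxy])
  simpa using LinearMap.finrank_le_finrank_of_injective hl

/-- The transpose of a family of linear maps. -/
def dualFamily (T : End F V →ₗ[F] P →ₗ[F] Q) : End F V →ₗ[F] Dual F Q →ₗ[F] Dual F P :=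
  Dual.transpose ∘ₗ T

theorem injective_dualFamily (hinj : Function.Injective T) : Function.Injective (dualFamily T) :=
  fun X Y h => hinj <| LinearMap.ext fun v => sub_eq_zero.1 <|
    (forall_dual_apply_eq_zero_iff F _).1 fun f => by
      rw [map_sub, sub_eq_zero]
      exact LinearMap.congr_fun (LinearMap.congr_fun h f) v

theorem exists_isActivePair_dualFamily_iff [FiniteDimensional F P] {f : Dual F Q} :
    (∃ ξ, IsActivePair (dualFamily T) e ξ f) ↔ ∃ v, IsActivePair T e f v :=
  (evalEquiv F P).surjective.exists

section Span

variable {z : Q}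

theorem injective_dualFamily_flip_of_mem_span (hinj : Function.Injective T)
    (hz : ∀ X ∈ rankOneNilpotent F e, ∀ v, T X v ∈ F ∙ z) {f : Dual F Q} (hf : f z ≠ 0) :
    Function.Injective ((dualFamily T ∘ₗ (rankOneNilpotent F e).subtype).flip f) := by
  refine (injective_iff_map_eq_zero _).2 fun X hX => Subtype.ext (hinj (LinearMap.ext fun v => ?_))
  obtain ⟨c, hc⟩ := Submodule.mem_span_singleton.1 (hz X X.2 v)
  have hfv : f (T X v) = 0 := LinearMap.congr_fun hX v
  rw [← hc, map_smul, smul_eq_mul] at hfv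
  rw [← hc, (mul_eq_zero.1 hfv).resolve_right hf]
  simp

theorem IsActivePair.apply_eq_zero_of_mem_span
    (hz : ∀ X ∈ rankOneNilpotent F e, ∀ v, T X v ∈ F ∙ z) {f : Dual F Q} (hf : f z ≠ 0) {v : P}
    (hv : IsActivePair T e f v) {X : End F V} (hX : X ∈ rankOneNilpotent F e) : T X v = 0 := by
  obtain ⟨c, hc⟩ := Submodule.mem_span_singleton.1 (hz X hX v)
  obtain ⟨g, hg, rfl⟩ := mem_rankOneNilpotent.1 hX
  have hfv := hv.1 (g.smulRight e) (by simp [hg])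
  rw [← hc, map_smul, smul_eq_mul] at hfv
  rw [← hc, (mul_eq_zero.1 hfv).resolve_right hf, zero_smul]

variable [FiniteDimensional F V] [FiniteDimensional F P]

theorem exists_isActivePair_of_mem_span (hV : 3 ≤ finrank F V) (hP : finrank F P = finrank F V)
    (hT : ∀ A, IsNearUnipotent A → Function.Surjective (T A)) (hinj : Function.Injective T)
    (he : e ≠ 0) (hz : ∀ X ∈ rankOneNilpotent F e, ∀ v, T X v ∈ F ∙ z) {f : Dual F Q}
    (hf : f z ≠ 0) : ∃ v, IsActivePair T e f v := by
  by_contra hnot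
  have hr : IsRankLEOne ((dualFamily T ∘ₗ (rankOneNilpotent F e).subtype).flip f) :=
    isRankLEOne_of_forall_not_isActivePair (by rw [Subspace.dual_finrank_eq, hP])
      (fun A hA => LinearMap.dualMap_injective_iff.2 (hT A hA)) he fun ξ hξ =>
        hnot (exists_isActivePair_dualFamily_iff.1 ⟨ξ, hξ⟩)
  have h₁ := finrank_le_one_of_isRankLEOne_of_injective hr
    (injective_dualFamily_flip_of_mem_span hinj hz hf)
  have h₂ := finrank_rankOneNilpotent_add_one (F := F) he
  omega

theorem exists_smul_eq_of_forall_rankOneNilpotent (hP : finrank F P = finrank F V)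
    (hinj : Function.Injective T) (he : e ≠ 0)
    (hz : ∀ X ∈ rankOneNilpotent F e, ∀ v, T X v ∈ F ∙ z) {f : Dual F Q} (hf : f z ≠ 0) {k v : P}
    (hk : k ≠ 0) (hkX : ∀ X ∈ rankOneNilpotent F e, T X k = 0)
    (hvX : ∀ X ∈ rankOneNilpotent F e, T X v = 0) : ∃ c : F, c • k = v := by
  let U := (LinearMap.range
    ((dualFamily T ∘ₗ (rankOneNilpotent F e).subtype).flip f)).dualCoannihilator
  have hU {x : P} (hx : ∀ X ∈ rankOneNilpotent F e, T X x = 0) : x ∈ U := by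
    rw [Submodule.mem_dualCoannihilator]
    rintro _ ⟨X, rfl⟩
    exact (congrArg f (hx X X.2)).trans (map_zero f)
  have hdim : finrank F U = 1 := by
    have h := Subspace.finrank_add_finrank_dualCoannihilator_eq (LinearMap.range
      ((dualFamily T ∘ₗ (rankOneNilpotent F e).subtype).flip f))
    rw [LinearMap.finrank_range_of_inj (injective_dualFamily_flip_of_mem_span hinj hz hf), hP,
      ← finrank_rankOneNilpotent_add_one he] at h
    exact Nat.add_left_cancel h
  obtain ⟨c, hc⟩ := (finrank_eq_one_iff_of_nonzero' (⟨k, hU hkX⟩ : U)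
    (by simpa using hk)).1 hdim ⟨v, hU hvX⟩
  exact ⟨c, congrArg Subtype.val hc⟩

theorem exists_ne_zero_forall_apply_eq_zero_of_mem_span (hV : 3 ≤ finrank F V)
    (hP : finrank F P = finrank F V)
    (hT : ∀ A, IsNearUnipotent A → Function.Surjective (T A)) (hinj : Function.Injective T)
    (he : e ≠ 0) (hz : ∀ X ∈ rankOneNilpotent F e, ∀ v, T X v ∈ F ∙ z) :
    ∃ k : P, k ≠ 0 ∧ ∀ X : End F V, X e = 0 → T X k = 0 := by
  have hz₀ : z ≠ 0 := by
    rintro rfl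
    obtain ⟨X, hX, hX₀⟩ := (rankOneNilpotent F e).ne_bot_iff.1 fun h => by
      have := finrank_rankOneNilpotent_add_one (F := F) he
      rw [h, finrank_bot] at this
      omega
    exact hX₀ (hinj (LinearMap.ext fun v => by simpa using hz X hX v))
  have hactive (f : Dual F Q) (hf : f z ≠ 0) : ∃ v, IsActivePair T e f v :=
    exists_isActivePair_of_mem_span hV hP hT hinj he hz hf
  obtain ⟨f₀, hf₀⟩ := Projective.exists_dual_eq_one F hz₀
  have hf₀' : f₀ z ≠ 0 := hf₀ ▸ one_ne_zero
  obtain ⟨k, hk⟩ := hactive f₀ hf₀'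
  have hk₀ : k ≠ 0 := fun h => hk.2 (by simp [h])
  refine ⟨k, hk₀, fun X hX => (forall_dual_apply_eq_zero_iff F _).1 fun f => ?_⟩
  have hspan : Dual.eval F Q (T X k) = 0 := LinearMap.ext_on
    (span_setOf_apply_ne_zero (h := Dual.eval F Q z) fun h => hf₀' (LinearMap.congr_fun h f₀))
    fun f (hf : f z ≠ 0) => by
      obtain ⟨v, hv⟩ := hactive f hf
      have hv₀ : v ≠ 0 := fun h => hv.2 (by simp [h])
      obtain ⟨c, rfl⟩ := exists_smul_eq_of_forall_rankOneNilpotent hP hinj he hz hf hv₀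
        (fun X => hv.apply_eq_zero_of_mem_span hz hf) fun X => hk.apply_eq_zero_of_mem_span hz hf₀'
      simp [hv.1 X hX]
  exact LinearMap.congr_fun hspan f

end Span

theorem exists_smul_eq_of_forall_apply_eq_zero [FiniteDimensional F Q] {f g : Dual F Q}
    (h : ∀ x, f x = 0 → g x = 0) : ∃ c : F, c • f = g :=
  exists_smul_eq_of_forall_dual fun ξ hξ => by
    obtain ⟨x, rfl⟩ := (evalEquiv F Q).surjective ξ
    exact h x hξ

section Bases

variable [FiniteDimensional F V] [FiniteDimensional F P] [FiniteDimensional F Q] {n : ℕ}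
  {b : Basis (Fin n) F P} {f : Fin n → Dual F Q}

theorem map_ker_applyₗ_eq_of_isActivePair (hV : finrank F V = n)
    (hQ : finrank F Q = n) (hinj : Function.Injective T) (he : e ≠ 0)
    (hb : ∀ i, IsActivePair T e (f i) (b i)) {Y : P →ₗ[F] Q} (hY : ∀ i, f i (Y (b i)) = 0) :
    ∃ X : End F V, X e = 0 ∧ T X = Y := by
  let Φ : (P →ₗ[F] Q) →ₗ[F] Fin n → F := LinearMap.pi fun i => f i ∘ₗ LinearMap.applyₗ (b i)
  have hΦ : Function.Surjective Φ := fun x => by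
    refine ⟨b.constr F fun i => (x i / f i (T 1 (b i))) • T 1 (b i), funext fun i => ?_⟩
    simp [Φ, (hb i).2]
  let L : Submodule F (End F V) := LinearMap.ker (LinearMap.applyₗ e)
  have hle : L.map T ≤ LinearMap.ker Φ := by
    rintro _ ⟨X, hX, rfl⟩
    exact funext fun i => (hb i).1 X hX
  have hP : finrank F P = n := by simp [finrank_eq_card_basis b]
  have hL : finrank F L + finrank F V = finrank F (End F V) := finrank_ker_applyₗ_add he
  have hker := LinearMap.finrank_range_add_finrank_ker Φ
  rw [LinearMap.range_eq_top.2 hΦ, finrank_top, finrank_fin_fun, finrank_linearMap, hP, hQ] at hker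
  rw [finrank_linearMap, hV] at hL
  have heq := Submodule.eq_of_le_of_finrank_eq hle (by
    rw [← (Submodule.equivMapOfInjective T hinj L).finrank_eq]
    omega)
  obtain ⟨X, hX, hXY⟩ := heq ▸ (show Y ∈ LinearMap.ker Φ from funext hY)
  exact ⟨X, hX, hXY⟩

theorem exists_smul_eq_of_isActivePair (hV : finrank F V = n)
    (hQ : finrank F Q = n) (hinj : Function.Injective T) (he : e ≠ 0)
    (hb : ∀ i, IsActivePair T e (f i) (b i)) {g : Dual F Q} {v : P} (hgv : IsActivePair T e g v)
    {j : Fin n} (hj : b.coord j v ≠ 0) : ∃ c : F, c • f j = g := by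
  refine exists_smul_eq_of_forall_apply_eq_zero fun x hx => ?_
  obtain ⟨X, hX, hXY⟩ := map_ker_applyₗ_eq_of_isActivePair hV hQ hinj he hb
    (Y := (b.coord j).smulRight x) fun i => by
      rcases eq_or_ne i j with rfl | hij <;> simp_all
  have h := hgv.1 X hX
  rw [hXY, LinearMap.smulRight_apply, map_smul, smul_eq_mul] at h
  exact (mul_eq_zero.1 h).resolve_left hj

theorem linearIndependent_of_isActivePair (hV : finrank F V = n)
    (hQ : finrank F Q = n) (hinj : Function.Injective T) (he : e ≠ 0)
    (hb : ∀ i, IsActivePair T e (f i) (b i))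
    (hspan : Submodule.span F {g | ∃ v, IsActivePair T e g v} = ⊤) : LinearIndependent F f := by
  refine linearIndependent_of_top_le_span_of_card_eq_finrank ?_ (by
    rw [Subspace.dual_finrank_eq, hQ, Fintype.card_fin])
  rw [← hspan, Submodule.span_le]
  rintro g ⟨v, hgv⟩
  obtain ⟨j, hj⟩ : ∃ j, b.coord j v ≠ 0 := by
    by_contra! h
    exact hgv.2 (by simp [b.forall_coord_eq_zero_iff.1 h])
  obtain ⟨c, rfl⟩ := exists_smul_eq_of_isActivePair hV hQ hinj he hb hgv hj
  exact Submodule.smul_mem _ _ (Submodule.subset_span ⟨j, rfl⟩)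

theorem not_isActivePair_of_coord_ne_zero (hV : finrank F V = n)
    (hQ : finrank F Q = n) (hinj : Function.Injective T) (he : e ≠ 0)
    (hb : ∀ i, IsActivePair T e (f i) (b i)) (hf : LinearIndependent F f) {v : P} {i j : Fin n}
    (hij : i ≠ j) (hi : b.coord i v ≠ 0) (hj : b.coord j v ≠ 0) (g : Dual F Q) :
    ¬ IsActivePair T e g v := fun hgv => by
  obtain ⟨c, hc⟩ := exists_smul_eq_of_isActivePair hV hQ hinj he hb hgv hi
  obtain ⟨d, hd⟩ := exists_smul_eq_of_isActivePair hV hQ hinj he hb hgv hj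
  have hg : c ≠ 0 := fun h => hgv.2 (by simp [← hc, h])
  exact hij (hf.eq_of_smul_apply_eq_smul_apply c d i j hg (hc.trans hd.symm))

end Bases

theorem eq_zero_of_forall_rankOneNilpotent_apply_eq_zero (hinj : Function.Injective T)
    (X : rankOneNilpotent F e)
    (hX : ∀ v, (T ∘ₗ (rankOneNilpotent F e).subtype).flip v X = 0) : X = 0 :=
  Subtype.ext (hinj (by ext v; simpa using hX v))

section Main

variable [FiniteDimensional F V] [FiniteDimensional F P] [FiniteDimensional F Q]

theorem exists_ne_zero_forall_apply_eq_zero_of_span_ne_top (hV : 3 ≤ finrank F V)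
    (hF : (∃ c : F, c ≠ 0 ∧ c ≠ 1) ∨ 4 ≤ finrank F V) (hP : finrank F P = finrank F V)
    (hQ : finrank F Q = finrank F V) (hT : ∀ A, IsNearUnipotent A → Function.Bijective (T A))
    (hinj : Function.Injective T) (he : e ≠ 0)
    (hspan : Submodule.span F {v | ∃ f, IsActivePair T e f v} ≠ ⊤) :
    ∃ k : P, k ≠ 0 ∧ ∀ X : End F V, X e = 0 → T X k = 0 := by
  have hN := finrank_rankOneNilpotent_add_one (F := F) he
  obtain ⟨h, hh, hle⟩ := Submodule.exists_le_ker_of_lt_top _ (lt_top_iff_ne_top.2 hspan)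
  obtain ⟨z, hz⟩ := exists_forall_apply_mem_span_of_dual
    (a := (T ∘ₗ (rankOneNilpotent F e).subtype).flip) (by omega) (hF.imp_right (by omega))
    (eq_zero_of_forall_rankOneNilpotent_apply_eq_zero hinj) hh fun v hv =>
      isRankLEOne_of_forall_not_isActivePair hQ.le (fun A hA => (hT A hA).1) he fun f hf =>
        hv (hle (Submodule.subset_span ⟨f, hf⟩))
  exact exists_ne_zero_forall_apply_eq_zero_of_mem_span hV hP (fun A hA => (hT A hA).2) hinj he
    fun X hX v => hz v ⟨X, hX⟩

theorem exists_ne_zero_forall_apply_eq_zero_of_span_eq_top (hV : 3 ≤ finrank F V)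
    (hF : (∃ c : F, c ≠ 0 ∧ c ≠ 1) ∨ 4 ≤ finrank F V) (hP : finrank F P = finrank F V)
    (hQ : finrank F Q = finrank F V) (hT : ∀ A, IsNearUnipotent A → Function.Bijective (T A))
    (hinj : Function.Injective T) (he : e ≠ 0)
    (hspan : Submodule.span F {v | ∃ f, IsActivePair T e f v} = ⊤)
    (hspan' : Submodule.span F {f | ∃ v, IsActivePair T e f v} = ⊤) :
    ∃ k : P, k ≠ 0 ∧ ∀ X : End F V, X e = 0 → T X k = 0 := by
  have hN := finrank_rankOneNilpotent_add_one (F := F) he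
  obtain ⟨v, hv, hvspan, hvi⟩ :=
    Submodule.exists_fun_fin_finrank_span_eq F {v | ∃ f, IsActivePair T e f v}
  choose f hf using hv
  let b : Basis _ F P := Basis.mk hvi (hvspan.trans hspan).ge
  have hb i : IsActivePair T e (f i) (b i) := by simpa [b] using hf i
  have hn : finrank F (Submodule.span F {v | ∃ f, IsActivePair T e f v}) = finrank F V := by
    rw [hspan, finrank_top, hP]
  have hfi := linearIndependent_of_isActivePair hn.symm (hQ.trans hn.symm) hinj he hb hspan'
  obtain ⟨z, hz⟩ := exists_forall_apply_mem_span_of_basis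
    (a := (T ∘ₗ (rankOneNilpotent F e).subtype).flip) (hn ▸ hV) (hF.imp_right hn.symm.le.trans')
    (by omega) (eq_zero_of_forall_rankOneNilpotent_apply_eq_zero hinj) b
    fun x i j hij hi hj =>
      isRankLEOne_of_forall_not_isActivePair hQ.le (fun A hA => (hT A hA).1) he
        (not_isActivePair_of_coord_ne_zero hn.symm (hQ.trans hn.symm) hinj he hb hfi hij hi hj)
  exact exists_ne_zero_forall_apply_eq_zero_of_mem_span hV hP (fun A hA => (hT A hA).2) hinj he
    fun X hX v => hz v ⟨X, hX⟩

theorem exists_ne_zero_forall_apply_eq_zero_or_comp_eq_zero (hV : 3 ≤ finrank F V)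
    (hF : (∃ c : F, c ≠ 0 ∧ c ≠ 1) ∨ 4 ≤ finrank F V) (hP : finrank F P = finrank F V)
    (hQ : finrank F Q = finrank F V) (hT : ∀ A, IsNearUnipotent A → Function.Bijective (T A))
    (hinj : Function.Injective T) (he : e ≠ 0) :
    (∃ k : P, k ≠ 0 ∧ ∀ X : End F V, X e = 0 → T X k = 0) ∨
      ∃ f : Dual F Q, f ≠ 0 ∧ ∀ X : End F V, X e = 0 → f ∘ₗ T X = 0 := by
  by_cases hspan : Submodule.span F {v | ∃ f, IsActivePair T e f v} = ⊤
  · by_cases hspan' : Submodule.span F {f | ∃ v, IsActivePair T e f v} = ⊤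
    · exact .inl (exists_ne_zero_forall_apply_eq_zero_of_span_eq_top hV hF hP hQ hT hinj he hspan
        hspan')
    · refine .inr (exists_ne_zero_forall_apply_eq_zero_of_span_ne_top (T := dualFamily T) hV hF
        (by rw [Subspace.dual_finrank_eq, hQ]) (by rw [Subspace.dual_finrank_eq, hP])
        (fun A hA => LinearMap.dualMap_bijective_iff.2 (hT A hA)) (injective_dualFamily hinj) he ?_)
      simpa only [exists_isActivePair_dualFamily_iff] using hspan'
  · exact .inl (exists_ne_zero_forall_apply_eq_zero_of_span_ne_top hV hF hP hQ hT hinj he hspan)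

end Main

end AnnihilatorImages

section StandardForm

open Module

variable {F V P Q : Type*} [Field F] [AddCommGroup V] [Module F V] [AddCommGroup P] [Module F P]
  [AddCommGroup Q] [Module F Q] {T : End F V →ₗ[F] P →ₗ[F] Q}

theorem exists_surjective_forall_apply_eq_apply (hT : Function.Surjective T) {e : V} (he : e ≠ 0)
    {k : P} (hk : k ≠ 0) (h : ∀ X : End F V, X e = 0 → T X k = 0) :
    ∃ L : V →ₗ[F] Q, Function.Surjective L ∧ ∀ X, T X k = L (X e) := by
  obtain ⟨g, hg⟩ := Projective.exists_dual_eq_one F he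
  obtain ⟨f, hf⟩ := Projective.exists_dual_eq_one F hk
  have hL X : T X k = T (g.smulRight (X e)) k := by
    rw [← sub_eq_zero, ← LinearMap.sub_apply, ← map_sub]
    exact h _ (by simp [hg])
  refine ⟨T.flip k ∘ₗ LinearMap.smulRightₗ g, fun y => ?_, hL⟩
  obtain ⟨X, hX⟩ := hT (f.smulRight y)
  exact ⟨X e, (hL X).symm.trans (by simp [hX, hf])⟩

theorem linearIndependent_of_forall_apply_eq_apply {ι : Type*} {b : Basis ι F V} {k : ι → P}
    {L : ι → V →ₗ[F] Q} (hL : ∀ i, L i ≠ 0) (h : ∀ i X, T X (k i) = L i (X (b i))) :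
    LinearIndependent F k := by
  classical
  refine linearIndependent_iff'.2 fun s c hc i hi => ?_
  obtain ⟨x, hx⟩ := DFunLike.ne_iff.1 (hL i)
  have hsum : ∑ j ∈ s, c j • L j ((b.coord i).smulRight x (b j)) = 0 := by
    simpa [h] using congrArg (T ((b.coord i).smulRight x)) hc
  rw [Finset.sum_eq_single_of_mem i hi fun j _ hji => by simp [hji]] at hsum
  simp_all

theorem apply_eq_coord_smul_of_forall_apply_eq_apply {ι : Type*} [Fintype ι] {b : Basis ι F V}
    {b' : Basis ι F P} {L : ι → V →ₗ[F] Q} (h : ∀ i X, T X (b' i) = L i (X (b i))) {k : P}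
    {L₀ : V →ₗ[F] Q} (hk : ∀ X, T X k = L₀ (X (∑ i, b i))) (i : ι) (x : V) :
    L₀ x = b'.coord i k • L i x := by
  classical
  let X := (b.coord i).smulRight x
  calc L₀ x = L₀ (X (∑ j, b j)) := by simp [X, Finsupp.single_apply]
    _ = T X (∑ j, b'.coord j k • b' j) := by simp only [← hk, Basis.coord_apply, b'.sum_repr]
    _ = ∑ j, b'.coord j k • L j (X (b j)) := by simp only [map_sum, map_smul, h]
    _ = b'.coord i k • L i x := by simp [X, Finsupp.single_apply, apply_ite]

theorem exists_comp_comp_eq_of_forall_exists [FiniteDimensional F V] [Nontrivial V]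
    (hP : finrank F P = finrank F V) (hT : Function.Surjective T)
    (h : ∀ e : V, e ≠ 0 → ∃ k : P, k ≠ 0 ∧ ∀ X : End F V, X e = 0 → T X k = 0) :
    ∃ (L : V →ₗ[F] Q) (q : P →ₗ[F] V), ∀ X, T X = L ∘ₗ X ∘ₗ q := by
  have hex (e : V) (he : e ≠ 0) : ∃ k : P, k ≠ 0 ∧
      ∃ L : V →ₗ[F] Q, Function.Surjective L ∧ ∀ X, T X k = L (X e) := by
    obtain ⟨k, hk, hkX⟩ := h e he
    exact ⟨k, hk, exists_surjective_forall_apply_eq_apply hT he hk hkX⟩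
  rcases subsingleton_or_nontrivial Q with hQ | hQ
  · exact ⟨0, 0, fun X => LinearMap.ext fun _ => Subsingleton.elim _ _⟩
  have hne {L : V →ₗ[F] Q} (hL : Function.Surjective L) : L ≠ 0 := by
    rintro rfl
    obtain ⟨y, hy⟩ := exists_ne (0 : Q)
    obtain ⟨x, hx⟩ := hL y
    exact hy (by simpa using hx.symm)
  let b := finBasis F V
  have : Nonempty (Fin (finrank F V)) := ⟨0, finrank_pos⟩
  choose k _ L hL hkL using fun i => hex (b i) (b.ne_zero i)
  have hk : LinearIndependent F k :=
    linearIndependent_of_forall_apply_eq_apply (b := b) (fun i => hne (hL i)) hkL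
  have : FiniteDimensional F P := finite_of_finrank_pos (hP ▸ finrank_pos)
  let bk : Basis _ F P := basisOfLinearIndependentOfCardEqFinrank hk (by simp [hP])
  have hsum : ∑ i, b i ≠ 0 := fun h₀ => by
    simpa using Fintype.linearIndependent_iff.1 b.linearIndependent 1 (by simpa using h₀)
      ⟨0, finrank_pos⟩
  obtain ⟨k₀, _, L₀, hL₀, hk₀⟩ := hex (∑ i, b i) hsum
  have hc i x : L₀ x = bk.coord i k₀ • L i x :=
    apply_eq_coord_smul_of_forall_apply_eq_apply (b := b) (by simpa [bk] using hkL) hk₀ i x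
  refine ⟨L₀, bk.constr F fun i => (bk.coord i k₀)⁻¹ • b i, fun X => bk.ext fun i => ?_⟩
  have hci : bk.coord i k₀ ≠ 0 := fun h₀ => hne hL₀ (LinearMap.ext fun x => by simp [hc i, h₀])
  rw [LinearMap.comp_apply, LinearMap.comp_apply, bk.constr_basis, map_smul, map_smul, hc i,
    smul_smul, inv_mul_cancel₀ hci, one_smul]
  simpa [bk] using hkL i X

theorem forall_exists_or_forall_exists_of_surjective (hT : Function.Surjective T)
    (h : ∀ e : V, e ≠ 0 → (∃ k : P, k ≠ 0 ∧ ∀ X : End F V, X e = 0 → T X k = 0) ∨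
      ∃ f : Dual F Q, f ≠ 0 ∧ ∀ X : End F V, X e = 0 → f ∘ₗ T X = 0) :
    (∀ e : V, e ≠ 0 → ∃ k : P, k ≠ 0 ∧ ∀ X : End F V, X e = 0 → T X k = 0) ∨
      ∀ e : V, e ≠ 0 → ∃ f : Dual F Q, f ≠ 0 ∧ ∀ X : End F V, X e = 0 → f ∘ₗ T X = 0 := by
  by_contra! hne
  obtain ⟨⟨e₁, he₁, h₁⟩, e₂, he₂, h₂⟩ := hne
  obtain ⟨f, hf, hfX⟩ := (h e₁ he₁).resolve_left (by push Not; exact h₁)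
  obtain ⟨k, hk, hkX⟩ := (h e₂ he₂).resolve_right (by push Not; exact h₂)
  obtain ⟨g, hg₁, hg₂⟩ : ∃ g : Dual F V, g e₁ = 1 ∧ g e₂ = 0 := by
    obtain ⟨g, hg₂, hg₁⟩ : ∃ g : Dual F V, g e₂ = 0 ∧ g e₁ ≠ 0 := by
      by_contra! hg
      obtain ⟨a, rfl⟩ := exists_smul_eq_of_forall_dual hg
      obtain ⟨X, hX, hXk⟩ := h₁ k hk
      exact hXk (hkX X (by simpa [(smul_ne_zero_iff.1 he₁).1] using hX))
    exact ⟨(g e₁)⁻¹ • g, by simp [hg₁], by simp [hg₂]⟩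
  obtain ⟨p, hp⟩ := Projective.exists_dual_eq_one F hk
  obtain ⟨y, hy⟩ := DFunLike.ne_iff.1 hf
  obtain ⟨X, hX⟩ := hT (p.smulRight y)
  let X₂ : End F V := g.smulRight (X e₁)
  have hk₂ : T X₂ k = 0 := hkX _ (by simp [X₂, hg₂])
  have hf₁ : f (T (X - X₂) k) = 0 := LinearMap.congr_fun (hfX _ (by simp [X₂, hg₁])) k
  rw [map_sub, LinearMap.sub_apply, hk₂, sub_zero, hX] at hf₁
  exact hy (by simpa [hp] using hf₁)

end StandardForm

section MatrixMaps

variable {F n : Type*} [Field F] [Fintype n] {T : Matrix n n F →ₗ[F] Matrix n n F}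

theorem mulVec_eq_zero_of_apply_mulVec_eq_zero (hT : Function.Surjective T) {e k : n → F}
    (he : e ≠ 0) (hk : k ≠ 0) (h : ∀ X, X *ᵥ e = 0 → T X *ᵥ k = 0) {X : Matrix n n F}
    (hX : T X *ᵥ k = 0) : X *ᵥ e = 0 := by
  classical
  obtain ⟨L, hL, hTL⟩ := exists_surjective_forall_apply_eq_apply (T := toLin'.conj T)
    ((toLin'.surjective.comp hT).comp toLin'.symm.surjective) he hk
    fun X hX => h _ (by simpa using hX)
  have hLX : L (X *ᵥ e) = 0 := by simpa [hX] using (hTL (toLin' X)).symm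
  exact (map_eq_zero_iff L (LinearMap.injective_iff_surjective.2 hL)).1 hLX

variable [DecidableEq n]

/-- The linear maps `X ↦ P * X * Q` and `X ↦ P * Xᵀ * Q` with `P` and `Q` invertible, the standard
form in linear preserver problems. -/
def IsStandardMap (T : Matrix n n F →ₗ[F] Matrix n n F) : Prop :=
  ∃ P Q : Matrix n n F, IsUnit P ∧ IsUnit Q ∧
    ((∀ X, T X = P * X * Q) ∨ ∀ X, T X = P * Xᵀ * Q)

theorem IsStandardMap.symm {T : Matrix n n F ≃ₗ[F] Matrix n n F}
    (hT : IsStandardMap (T : Matrix n n F →ₗ[F] Matrix n n F)) :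
    IsStandardMap (T.symm : Matrix n n F →ₗ[F] Matrix n n F) := by
  obtain ⟨P, Q, hP, hQ, h⟩ := hT
  have hcancel Z : P⁻¹ * (P * Z * Q) * Q⁻¹ = Z := by
    rw [Matrix.mul_assoc P, nonsing_inv_mul_cancel_left _ _ ((isUnit_iff_isUnit_det P).1 hP),
      mul_nonsing_inv_cancel_right _ _ ((isUnit_iff_isUnit_det Q).1 hQ)]
  rcases h with h | h
  · refine ⟨P⁻¹, Q⁻¹, isUnit_nonsing_inv_iff.2 hP, isUnit_nonsing_inv_iff.2 hQ, .inl fun X => ?_⟩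
    obtain ⟨Y, rfl⟩ := T.surjective X
    have hY : T Y = P * Y * Q := h Y
    rw [LinearEquiv.coe_coe, T.symm_apply_apply, hY, hcancel]
  · refine ⟨Q⁻¹ᵀ, P⁻¹ᵀ, (isUnit_transpose _).2 (isUnit_nonsing_inv_iff.2 hQ),
      (isUnit_transpose _).2 (isUnit_nonsing_inv_iff.2 hP), .inr fun X => ?_⟩
    obtain ⟨Y, rfl⟩ := T.surjective X
    have hY : T Y = P * Yᵀ * Q := h Y
    rw [LinearEquiv.coe_coe, T.symm_apply_apply, hY, ← transpose_mul, ← transpose_mul,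
      ← Matrix.mul_assoc, hcancel, transpose_transpose]

theorem IsStandardMap.exists_eq_apply_one_mul (hT : IsStandardMap T) :
    ∃ P : Matrix n n F, IsUnit P ∧
      ((∀ X, T X = T 1 * (P * X * P⁻¹)) ∨ ∀ X, T X = T 1 * (P * Xᵀ * P⁻¹)) := by
  obtain ⟨P, Q, -, hQ, h⟩ := hT
  have hQdet := (isUnit_iff_isUnit_det Q).1 hQ
  have hcancel Y : P * Y * Q = P * Q * (Q⁻¹ * Y * Q) := by
    rw [Matrix.mul_assoc Q⁻¹, Matrix.mul_assoc P Q, mul_nonsing_inv_cancel_left _ _ hQdet,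
      Matrix.mul_assoc]
  refine ⟨Q⁻¹, isUnit_nonsing_inv_iff.2 hQ, h.imp (fun h X => ?_) fun h X => ?_⟩
  · rw [h X, h 1, nonsing_inv_nonsing_inv _ hQdet, Matrix.mul_one, hcancel]
  · rw [h X, h 1, nonsing_inv_nonsing_inv _ hQdet, transpose_one, Matrix.mul_one, hcancel]

theorem exists_eq_mul_mul_of_forall_exists [Nonempty n] (hT : Function.Surjective T)
    (h : ∀ e : n → F, e ≠ 0 → ∃ k ≠ 0, ∀ X, X *ᵥ e = 0 → T X *ᵥ k = 0) :
    ∃ P Q : Matrix n n F, IsUnit P ∧ IsUnit Q ∧ ∀ X, T X = P * X * Q := by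
  obtain ⟨L, q, hLq⟩ := exists_comp_comp_eq_of_forall_exists (T := toLin'.conj T) rfl
    ((toLin'.surjective.comp hT).comp toLin'.symm.surjective) fun e he =>
      (h e he).imp fun k hk => ⟨hk.1, fun X hX => hk.2 _ (by simpa using hX)⟩
  have hPQ X : T X = LinearMap.toMatrix' L * X * LinearMap.toMatrix' q := by
    apply toLin'.injective
    simpa [toLin'_mul, LinearMap.comp_assoc] using hLq (toLin' X)
  obtain ⟨X, hX⟩ := hT 1
  rw [hPQ] at hX
  exact ⟨_, _, .of_mul_eq_one _ ((Matrix.mul_assoc ..).symm.trans hX),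
    .of_mul_eq_one_right _ hX, hPQ⟩

theorem dotProductEquiv_comp_toLin'_eq_zero_iff {u : n → F} {A : Matrix n n F} :
    dotProductEquiv F n u ∘ₗ toLin' A = 0 ↔ u ᵥ* A = 0 := by
  rw [← (dotProductEquiv F n).map_eq_zero_iff, LinearMap.ext_iff, LinearMap.ext_iff]
  simp [dotProduct_mulVec]

theorem isStandardMap_of_forall_exists_or_exists [Nonempty n] (hT : Function.Surjective T)
    (h : ∀ e : n → F, e ≠ 0 → (∃ k ≠ 0, ∀ X, X *ᵥ e = 0 → T X *ᵥ k = 0) ∨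
      ∃ u ≠ 0, ∀ X, X *ᵥ e = 0 → u ᵥ* T X = 0) :
    IsStandardMap T := by
  have hmix := forall_exists_or_forall_exists_of_surjective (T := toLin'.conj T)
    ((toLin'.surjective.comp hT).comp toLin'.symm.surjective) fun e he => (h e he).imp
      (fun ⟨k, hk, hkX⟩ => ⟨k, hk, fun X hX => hkX _ (by simpa using hX)⟩)
      fun ⟨u, hu, huX⟩ => ⟨dotProductEquiv F n u, by simpa using hu, fun X hX =>
        dotProductEquiv_comp_toLin'_eq_zero_iff.2 (huX _ (by simpa using hX))⟩
  rcases hmix with hleft | hright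
  · obtain ⟨P, Q, hP, hQ, hPQ⟩ := exists_eq_mul_mul_of_forall_exists hT fun e he =>
      (hleft e he).imp fun k hk => ⟨hk.1, fun X hX => by simpa using hk.2 (toLin' X) hX⟩
    exact ⟨P, Q, hP, hQ, .inl hPQ⟩
  · let Tt := (transposeLinearEquiv n n F F).toLinearMap ∘ₗ T
    obtain ⟨P, Q, hP, hQ, hPQ⟩ := exists_eq_mul_mul_of_forall_exists (T := Tt)
      ((transposeLinearEquiv n n F F).surjective.comp hT) fun e he => by
        obtain ⟨f, hf, hfX⟩ := hright e he
        obtain ⟨u, rfl⟩ := (dotProductEquiv F n).surjective f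
        refine ⟨u, by simpa using hf, fun X hX => ?_⟩
        have hu := dotProductEquiv_comp_toLin'_eq_zero_iff.1 (hfX (toLin' X) hX)
        simpa [Tt, mulVec_transpose] using hu
    refine ⟨Qᵀ, Pᵀ, (isUnit_transpose _).2 hQ, (isUnit_transpose _).2 hP, .inr fun X => ?_⟩
    rw [← transpose_transpose (T X), show (T X)ᵀ = P * X * Q from hPQ X, transpose_mul,
      transpose_mul, Matrix.mul_assoc]

theorem isStandardMap_of_forall_exists_or [Nonempty n] {T : Matrix n n F ≃ₗ[F] Matrix n n F}
    (h : ∀ k : n → F, k ≠ 0 → ∃ e ≠ 0, (∀ X, X *ᵥ e = 0 → T X *ᵥ k = 0) ∨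
      ∀ X, e ᵥ* X = 0 → T X *ᵥ k = 0) :
    IsStandardMap (T : Matrix n n F →ₗ[F] Matrix n n F) := by
  refine IsStandardMap.symm (T := T.symm)
    (isStandardMap_of_forall_exists_or_exists T.symm.surjective fun k hk => ?_)
  obtain ⟨e, he, h | h⟩ := h k hk
  · exact .inl ⟨e, he, fun Y hY =>
      mulVec_eq_zero_of_apply_mulVec_eq_zero (T := T.toLinearMap) T.surjective he hk h
        (by simpa using hY)⟩
  · let Tt := (transposeLinearEquiv n n F F).trans T
    refine .inr ⟨e, he, fun Y hY => (mulVec_transpose _ _).symm.trans ?_⟩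
    exact mulVec_eq_zero_of_apply_mulVec_eq_zero (T := Tt.toLinearMap) Tt.surjective he hk
      (fun X hX => h _ (by simpa [vecMul_transpose] using hX)) (by simpa [Tt] using hY)

end MatrixMaps

section Involutions

open Module

variable {F : Type*} [Field F] {n : ℕ}

theorem IsStronglyReversible.toMatrix'_mem_prodInv2 {A : End F (Fin n → F)}
    (hA : IsStronglyReversible A) : LinearMap.toMatrix' A ∈ ProdInv2 F n := by
  obtain ⟨J, hJ, hAJ⟩ := hA
  have hJJ : J * J = 1 := LinearMap.ext hJ
  have hAJA : A * (J * A) = J := LinearMap.ext hAJ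
  refine ⟨LinearMap.toMatrix' (A * J), LinearMap.toMatrix' J, ?_, ?_, ?_⟩
  · rw [← LinearMap.toMatrix'_mul, ← mul_assoc, mul_assoc A, hAJA, hJJ, LinearMap.toMatrix'_one]
  · rw [← LinearMap.toMatrix'_mul, hJJ, LinearMap.toMatrix'_one]
  · rw [← LinearMap.toMatrix'_mul, mul_assoc, hJJ, mul_one]

theorem IsNearUnipotent.toMatrix'_mem_prodInv2 {A : End F (Fin n → F)} (hA : IsNearUnipotent A) :
    LinearMap.toMatrix' A ∈ ProdInv2 F n :=
  hA.isStronglyReversible.toMatrix'_mem_prodInv2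

theorem det_sq_eq_one_of_mul_self_eq_one {J : Matrix (Fin n) (Fin n) F} (hJ : J * J = 1) :
    J.det ^ 2 = 1 := by
  rw [sq, ← det_mul, hJ, det_one]

theorem det_apply_sq_eq_one {S : Set (Matrix (Fin n) (Fin n) F)}
    (hS : S = ProdInv2 F n ∨ S = ProdInv3 F n ∨ S = ProdInv4 F n)
    {T : Matrix (Fin n) (Fin n) F → Matrix (Fin n) (Fin n) F} (hT : ∀ A ∈ S, T A ∈ S)
    {A : Matrix (Fin n) (Fin n) F} (hA : A ∈ ProdInv2 F n) : (T A).det ^ 2 = 1 := by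
  obtain ⟨J₁, J₂, h₁, h₂, rfl⟩ := hA
  rcases hS with rfl | rfl | rfl
  · obtain ⟨K₁, K₂, hK₁, hK₂, h⟩ := hT _ ⟨J₁, J₂, h₁, h₂, rfl⟩
    simp [h, mul_pow, det_sq_eq_one_of_mul_self_eq_one, hK₁, hK₂]
  · obtain ⟨K₁, K₂, K₃, hK₁, hK₂, hK₃, h⟩ :=
      hT (J₁ * J₂) ⟨J₁, J₂, 1, h₁, h₂, by simp, by simp⟩
    simp [h, mul_pow, det_sq_eq_one_of_mul_self_eq_one, hK₁, hK₂, hK₃]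
  · obtain ⟨K₁, K₂, K₃, K₄, hK₁, hK₂, hK₃, hK₄, h⟩ :=
      hT (J₁ * J₂) ⟨J₁, J₂, 1, 1, h₁, h₂, by simp, by simp, by simp⟩
    simp [h, mul_pow, det_sq_eq_one_of_mul_self_eq_one, hK₁, hK₂, hK₃, hK₄]

theorem isStandardMap_of_three_le (hn : 3 ≤ n) (hF : (∃ c : F, c ≠ 0 ∧ c ≠ 1) ∨ 4 ≤ n)
    {T : Matrix (Fin n) (Fin n) F →ₗ[F] Matrix (Fin n) (Fin n) F} (hT : Function.Bijective T)
    (hunit : ∀ A ∈ ProdInv2 F n, IsUnit (T A)) : IsStandardMap T := by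
  have : Nonempty (Fin n) := ⟨⟨0, by omega⟩⟩
  have hfin : finrank F (Fin n → F) = n := by simp
  refine isStandardMap_of_forall_exists_or_exists hT.2 fun e he => ?_
  have hmain := exists_ne_zero_forall_apply_eq_zero_or_comp_eq_zero (T := toLin'.conj T)
    (by rwa [hfin]) (by rwa [hfin]) rfl rfl (fun A hA => ?_)
    ((toLin'.injective.comp hT.1).comp toLin'.symm.injective) he
  · refine hmain.imp (fun ⟨k, hk, hkX⟩ => ⟨k, hk, fun X hX => by simpa using hkX (toLin' X) hX⟩) ?_
    rintro ⟨f, hf, hfX⟩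
    obtain ⟨u, rfl⟩ := (dotProductEquiv F (Fin n)).surjective f
    refine ⟨u, by simpa using hf, fun X hX => ?_⟩
    simpa using dotProductEquiv_comp_toLin'_eq_zero_iff.1 (hfX (toLin' X) hX)
  · have hTA := hunit _ hA.toMatrix'_mem_prodInv2
    exact (End.isUnit_iff _).1 (isUnit_toLin'_iff.2 hTA)

end Involutions

section TwoByTwo

open Module

variable {F : Type*} [Field F]

theorem isRankLEOne_toLin'_of_det_eq_zero {A : Matrix (Fin 2) (Fin 2) F} (hA : A.det = 0) :
    IsRankLEOne (toLin' A) := by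
  obtain ⟨v, hv, hAv⟩ := exists_mulVec_eq_zero_iff.2 hA
  have hker : LinearMap.ker (toLin' A) ≠ ⊥ :=
    (Submodule.ne_bot_iff _).2 ⟨v, by simpa using hAv, hv⟩
  have hpos := Submodule.one_le_finrank_iff.2 hker
  have hrank := LinearMap.finrank_range_add_finrank_ker (toLin' A)
  rw [finrank_fin_fun] at hrank
  obtain ⟨z, hz⟩ := finrank_le_one_iff.1 (show finrank F (LinearMap.range (toLin' A)) ≤ 1 by omega)
  refine isRankLEOne_of_forall_mem_span (z := z) fun w => ?_
  obtain ⟨c, hc⟩ := hz ⟨toLin' A w, LinearMap.mem_range_self _ w⟩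
  exact Submodule.mem_span_singleton.2 ⟨c, congrArg Subtype.val hc⟩

theorem exists_mulVec_eq_zero_or_exists_vecMul_eq_zero
    {U : Submodule F (Matrix (Fin 2) (Fin 2) F)} (hU : ∀ X ∈ U, X.det = 0) :
    (∃ k ≠ 0, ∀ X ∈ U, X *ᵥ k = 0) ∨ ∃ u ≠ 0, ∀ X ∈ U, u ᵥ* X = 0 := by
  have hrank : ∀ a ∈ U.map toLin'.toLinearMap, IsRankLEOne a := by
    rintro _ ⟨X, hX, rfl⟩
    exact isRankLEOne_toLin'_of_det_eq_zero (hU X hX)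
  rcases exists_mem_span_or_exists_ker_le_of_pairwise hrank fun a ha b hb _ =>
    ⟨1, one_ne_zero, hrank _ (by simpa using add_mem ha hb)⟩ with ⟨z, hz⟩ | ⟨l, hl⟩
  · obtain ⟨u, hu, huz⟩ := exists_ne_zero_dotProduct_eq_zero z
    refine .inr ⟨u, hu, fun X hX => ?_⟩
    rw [← dotProductEquiv_comp_toLin'_eq_zero_iff]
    refine LinearMap.ext fun w => ?_
    obtain ⟨c, hc⟩ := Submodule.mem_span_singleton.1 (hz _ ⟨X, hX, rfl⟩ w)
    simp [← show c • z = X *ᵥ w from hc, huz]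
  · have hker := LinearMap.ker_ne_bot_of_finrank_lt (f := l) (by simp)
    obtain ⟨k, hk, hk₀⟩ := Submodule.exists_mem_ne_zero_of_ne_bot hker
    exact .inl ⟨k, hk₀, fun X hX => hl _ ⟨X, hX, rfl⟩ k hk⟩

theorem isStandardMap_of_forall_det_eq_zero {T : Matrix (Fin 2) (Fin 2) F →ₗ[F] Matrix _ _ F}
    (hT : Function.Surjective T) (h : ∀ X, X.det = 0 → (T X).det = 0) : IsStandardMap T := by
  refine isStandardMap_of_forall_exists_or_exists hT fun e he => ?_
  let U := (LinearMap.ker ((mulVecBilin F F).flip e)).map T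
  refine (exists_mulVec_eq_zero_or_exists_vecMul_eq_zero (U := U) ?_).imp
    (fun ⟨k, hk, hkU⟩ => ⟨k, hk, fun X hX => hkU _ ⟨X, hX, rfl⟩⟩)
    fun ⟨u, hu, huU⟩ => ⟨u, hu, fun X hX => huU _ ⟨X, hX, rfl⟩⟩
  rintro _ ⟨X, hX, rfl⟩
  exact h X (exists_mulVec_eq_zero_iff.1 ⟨e, he, hX⟩)

theorem det_add_smul_fin_two (A B : Matrix (Fin 2) (Fin 2) F) (t : F) :
    (A + t • B).det = A.det + t * (A.trace * B.trace - (A * B).trace) + t ^ 2 * B.det := by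
  simp only [det_fin_two, trace_fin_two, mul_apply, Fin.sum_univ_two, Matrix.add_apply,
    Matrix.smul_apply, smul_eq_mul]
  ring

theorem mul_self_eq_one_of_trace_eq_zero {J : Matrix (Fin 2) (Fin 2) F} (htr : J.trace = 0)
    (hdet : J.det = -1) : J * J = 1 := by
  have h := aeval_self_charpoly J
  rw [charpoly_fin_two, htr, hdet] at h
  simpa [sq, add_neg_eq_zero] using h

theorem exists_trace_eq_zero_det_eq_neg_one (A : Matrix (Fin 2) (Fin 2) F) :
    ∃ J : Matrix (Fin 2) (Fin 2) F, J.trace = 0 ∧ J.det = -1 ∧ (A * J).trace = 0 := by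
  suffices ∃ x y z : F, x ^ 2 + y * z = 1 ∧ (A 0 0 - A 1 1) * x + A 0 1 * z + A 1 0 * y = 0 by
    obtain ⟨x, y, z, hxyz, hA⟩ := this
    refine ⟨!![x, y; z, -x], by simp, ?_, ?_⟩
    · rw [det_fin_two_of]
      linear_combination -hxyz
    · rw [eta_fin_two A, mul_fin_two, trace_fin_two_of]
      linear_combination hA
  by_cases h₀₁ : A 0 1 = 0
  · by_cases h₁₀ : A 1 0 = 0
    · exact ⟨0, 1, 1, by simp, by simp [h₀₁, h₁₀]⟩
    · exact ⟨1, (A 1 1 - A 0 0) / A 1 0, 0, by simp, by field_simp; ring⟩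
  · exact ⟨1, 0, (A 1 1 - A 0 0) / A 0 1, by simp, by field_simp; ring⟩

theorem mem_prodInv2_of_det_eq_one {A : Matrix (Fin 2) (Fin 2) F} (hA : A.det = 1) :
    A ∈ ProdInv2 F 2 := by
  obtain ⟨J, htr, hdet, hAJ⟩ := exists_trace_eq_zero_det_eq_neg_one A
  have hJ := mul_self_eq_one_of_trace_eq_zero htr hdet
  refine ⟨A * J, J, mul_self_eq_one_of_trace_eq_zero hAJ (by simp [hA, hdet]), hJ, ?_⟩
  rw [Matrix.mul_assoc, hJ, Matrix.mul_one]

theorem exists_forall_det_add_smul_eq (X : Matrix (Fin 2) (Fin 2) F) :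
    ∃ A : Matrix (Fin 2) (Fin 2) F, ∀ t, (A + t • X).det = 1 + t ^ 2 * X.det := by
  obtain ⟨L, L', D, rfl⟩ := Pivot.exists_list_transvec_mul_diagonal_mul_list_transvec X
  set P := (L.map TransvectionStruct.toMatrix).prod with hP
  set Q := (L'.map TransvectionStruct.toMatrix).prod with hQ
  refine ⟨P * !![0, -1; 1, 0] * Q, fun t => ?_⟩
  have hsum : P * !![0, -1; 1, 0] * Q + t • (P * diagonal D * Q)
      = P * (!![0, -1; 1, 0] + t • diagonal D) * Q := by
    simp only [Matrix.mul_add, Matrix.add_mul, Matrix.mul_smul, Matrix.smul_mul]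
  rw [hsum, det_mul, det_mul, det_mul, det_mul, hP, hQ, TransvectionStruct.det_toMatrix_prod,
    TransvectionStruct.det_toMatrix_prod]
  simp only [det_fin_two, Matrix.add_apply, Matrix.smul_apply, of_apply, cons_val', cons_val_zero,
    cons_val_one, cons_val_fin_one, diagonal_apply_eq, smul_eq_mul, ne_eq, zero_ne_one,
    one_ne_zero, not_false_eq_true, diagonal_apply_ne]
  ring

theorem eq_zero_of_forall_quadratic_sq_eq_one {c α β γ : F} (hc₀ : c ≠ 0) (hc₁ : c ^ 2 ≠ 1)
    (h : ∀ t, (α + t * β + t ^ 2 * γ) ^ 2 = 1) : γ = 0 := by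
  by_contra hγ
  have hc : γ * (c ^ 2 - 1) ≠ 0 := mul_ne_zero hγ (sub_ne_zero.2 hc₁)
  by_cases h₂ : (2 : F) = 0
  · have hzero (t : F) : t * β + t ^ 2 * γ = 0 := by
      apply pow_eq_zero_iff two_ne_zero |>.1
      linear_combination h t - h 0 - α * (t * β + t ^ 2 * γ) * h₂
    refine hc (mul_left_cancel₀ hc₀ ?_)
    linear_combination (c + 1) * (hzero c - c * hzero 1)
  · have hodd {t : F} (ht : t ≠ 0) : β * (α + t ^ 2 * γ) = 0 := by
      apply mul_left_cancel₀ (mul_ne_zero (mul_ne_zero h₂ h₂) ht)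
      linear_combination h t - h (-t)
    have hβ : β = 0 := by
      by_contra hβ
      have h₁ := (mul_eq_zero.1 (hodd one_ne_zero)).resolve_left hβ
      have hc' := (mul_eq_zero.1 (hodd hc₀)).resolve_left hβ
      exact hc (by linear_combination hc' - h₁)
    have heven {t : F} (ht : t ≠ 0) : 2 * α + t ^ 2 * γ = 0 := by
      apply mul_left_cancel₀ (mul_ne_zero hγ (pow_ne_zero 2 ht))
      subst hβ
      linear_combination h t - h 0
    exact hc (by linear_combination heven hc₀ - heven one_ne_zero)

theorem isStandardMap_of_exists_sq_ne_one (hF : ∃ c : F, c ≠ 0 ∧ c ^ 2 ≠ 1)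
    {T : Matrix (Fin 2) (Fin 2) F →ₗ[F] Matrix (Fin 2) (Fin 2) F} (hT : Function.Surjective T)
    (hdet : ∀ A ∈ ProdInv2 F 2, (T A).det ^ 2 = 1) : IsStandardMap T := by
  obtain ⟨c, hc₀, hc₁⟩ := hF
  refine isStandardMap_of_forall_det_eq_zero hT fun X hX => ?_
  obtain ⟨A, hA⟩ := exists_forall_det_add_smul_eq X
  refine eq_zero_of_forall_quadratic_sq_eq_one (α := (T A).det)
    (β := (T A).trace * (T X).trace - (T A * T X).trace) hc₀ hc₁ fun t => ?_
  rw [← det_add_smul_fin_two, ← map_smul, ← map_add]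
  exact hdet _ (mem_prodInv2_of_det_eq_one (by simp [hA, hX]))

theorem mul_mul_self_fin_two (X Y : Matrix (Fin 2) (Fin 2) F) :
    Y * X * Y = (X * Y).trace • Y - Y.det • X.adjugate := by
  rw [eta_fin_two X, eta_fin_two Y]
  ext i j
  fin_cases i <;> fin_cases j <;> simp [adjugate_fin_two, det_fin_two] <;> ring

theorem exists_mulVec_eq_smul_of_trace_mul_eq_zero {X Y : Matrix (Fin 2) (Fin 2) F} (hY : Y ≠ 0)
    (hdet : Y.det = 0) (htr : Y.trace = 0) (hXY : (X * Y).trace = 0) :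
    ∃ y ≠ 0, ∃ c : F, X *ᵥ y = c • y := by
  have hYY : Y * Y = 0 := by simpa [hdet, htr] using mul_mul_self_fin_two 1 Y
  have hYXY : Y * X * Y = 0 := by simpa [hdet, hXY] using mul_mul_self_fin_two X Y
  obtain ⟨z, hz⟩ : ∃ z, Y *ᵥ z ≠ 0 := by
    by_contra! h
    exact hY (ext_of_mulVec_single fun i => by simp only [h, zero_mulVec])
  refine ⟨Y *ᵥ z, hz, ?_⟩
  by_contra! h
  have hli : LinearIndependent F ![Y *ᵥ z, X *ᵥ Y *ᵥ z] :=
    (LinearIndependent.pair_iff' hz).2 fun c => (h c).symm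
  have hYy : Y *ᵥ Y *ᵥ z = 0 := by rw [mulVec_mulVec, hYY, zero_mulVec]
  have hYXy : Y *ᵥ X *ᵥ Y *ᵥ z = 0 := by rw [mulVec_mulVec, mulVec_mulVec, hYXY, zero_mulVec]
  have hzero : toLin' Y = 0 := by
    refine LinearMap.ext_on_range (hli.span_eq_top_of_card_eq_finrank' (by simp)) fun i => ?_
    fin_cases i
    exacts [hYy, hYXy]
  exact hY (toLin'.map_eq_zero_iff.1 hzero)

theorem sq_add_det_eq_of_mulVec_eq_smul {X : Matrix (Fin 2) (Fin 2) F} {y : Fin 2 → F} {c : F}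
    (hy : y ≠ 0) (h : X *ᵥ y = c • y) : c ^ 2 + X.det = c * X.trace := by
  have hdet : (X + (-c) • (1 : Matrix (Fin 2) (Fin 2) F)).det = 0 :=
    exists_mulVec_eq_zero_iff.1 ⟨y, hy, by simp [add_mulVec, h, neg_mulVec, smul_mulVec]⟩
  rw [det_add_smul_fin_two, trace_one, det_one, Matrix.mul_one] at hdet
  simp only [Fintype.card_fin, Nat.cast_ofNat, neg_mul, even_two, Even.neg_pow, mul_one] at hdet
  linear_combination hdet

theorem det_eq_zero_of_two_le_finrank (hF : ∀ c : F, c = 0 ∨ c ^ 2 = 1)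
    {U : Submodule F (Matrix (Fin 2) (Fin 2) F)} (hU : 2 ≤ finrank F U)
    (h₁ : ∀ X ∈ U, X.det ≠ 1) (h₂ : ∀ X ∈ U, X.trace = 0 → X.det ≠ -1)
    {X : Matrix (Fin 2) (Fin 2) F} (hX : X ∈ U) : X.det = 0 := by
  have hneg {Z : Matrix (Fin 2) (Fin 2) F} (hZ : Z ∈ U) (hdet : Z.det ≠ 0) : Z.det = -1 :=
    (sq_eq_one_iff.1 ((hF _).resolve_left hdet)).resolve_left (h₁ Z hZ)
  obtain ⟨⟨Y, hYU⟩, htr, hY⟩ := Submodule.exists_mem_ne_zero_of_ne_bot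
    (LinearMap.ker_ne_bot_of_finrank_lt (f := (traceLinearMap (Fin 2) F F).domRestrict U)
      (by rw [finrank_self]; omega))
  have htr : Y.trace = 0 := htr
  have hYdet : Y.det = 0 := by
    by_contra h
    exact h₂ Y hYU htr (hneg hYU h)
  have hXY : (X * Y).trace = 0 := by
    by_contra h
    refine h₁ _ (U.add_mem hX (U.smul_mem ((X.det - 1) / (X * Y).trace) hYU)) ?_
    rw [det_add_smul_fin_two, htr, hYdet]
    field_simp
    ring
  obtain ⟨y, hy, c, hc⟩ :=
    exists_mulVec_eq_smul_of_trace_mul_eq_zero (by simpa using hY) hYdet htr hXY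
  have hchar := sq_add_det_eq_of_mulVec_eq_smul hy hc
  by_contra hdet
  have hXdet := hneg hX hdet
  have hc₀ : c ≠ 0 := by
    rintro rfl
    exact hdet (by simpa using hchar)
  have hc₁ := (hF c).resolve_left hc₀
  rw [hc₁, hXdet, add_neg_cancel] at hchar
  exact h₂ X hX ((mul_eq_zero.1 hchar.symm).resolve_left hc₀) hXdet

theorem isStandardMap_of_forall_eq_zero_or_sq_eq_one (hF : ∀ c : F, c = 0 ∨ c ^ 2 = 1)
    {T : Matrix (Fin 2) (Fin 2) F →ₗ[F] Matrix (Fin 2) (Fin 2) F} (hT : Function.Bijective T)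
    (hunit : ∀ A ∈ ProdInv2 F 2, IsUnit (T A)) : IsStandardMap T := by
  let E := LinearEquiv.ofBijective T hT
  refine IsStandardMap.symm (T := E.symm)
    (isStandardMap_of_forall_det_eq_zero E.symm.surjective fun Y hY => ?_)
  obtain ⟨k, hk, hYk⟩ := exists_mulVec_eq_zero_iff.2 hY
  let U : Submodule F (Matrix (Fin 2) (Fin 2) F) := LinearMap.ker ((mulVecBilin F F).flip k ∘ₗ T)
  have hU : 2 ≤ finrank F U := by
    have hrank := LinearMap.finrank_range_add_finrank_ker ((mulVecBilin F F).flip k ∘ₗ T)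
    have hrange := Submodule.finrank_le (LinearMap.range ((mulVecBilin F F).flip k ∘ₗ T))
    rw [finrank_matrix, finrank_self, Fintype.card_fin] at hrank
    rw [finrank_fin_fun] at hrange
    change 2 ≤ finrank F (LinearMap.ker ((mulVecBilin F F).flip k ∘ₗ T))
    omega
  have hmem {A : Matrix (Fin 2) (Fin 2) F} (hA : A ∈ U) : A ∉ ProdInv2 F 2 := fun hA' =>
    hk (eq_zero_of_mulVec_eq_zero ((isUnit_iff_isUnit_det _).1 (hunit A hA')).ne_zero hA)
  refine det_eq_zero_of_two_le_finrank hF hU (fun X hX h => hmem hX (mem_prodInv2_of_det_eq_one h))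
    (fun X hX h h' => hmem hX ⟨X, 1, mul_self_eq_one_of_trace_eq_zero h h', by simp, by simp⟩) ?_
  change T (E.symm Y) *ᵥ k = 0
  rwa [← LinearEquiv.ofBijective_apply T (hf := hT), E.apply_symm_apply]

end TwoByTwo

section TransvectionProducts

/-- The vectors of `𝔽₂³`, over the Boolean ring `Bool` and in a list, so that counting problems
about them can be evaluated by the kernel. -/
def binaryVectors : List (Fin 3 → Bool) := do
  let x ← [0, 1]; let y ← [0, 1]; let z ← [0, 1]
  return ![x, y, z]

/-- The pairs `(v, f)` for which `1 + v fᵀ` is a transvection of `𝔽₂³`. -/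
def binaryTransvections : List ((Fin 3 → Bool) × (Fin 3 → Bool)) :=
  (binaryVectors ×ˢ binaryVectors).filter fun (v, f) => v ≠ 0 ∧ f ≠ 0 ∧ f ⬝ᵥ v = 0

/-- The products `(1 + v fᵀ) (1 + w gᵀ)` of two transvections of `𝔽₂³` with `f w = 1`, listed with
multiplicity. The condition `f w = 1` weights the classes of elements of order three and four in
the ratio `3 : 2`, and with these weights the character `X ↦ (-1) ^ trace (K X)` has its smallest
sum exactly for the matrices `K` of rank one. -/
def transvectionProducts : List (Matrix (Fin 3) (Fin 3) Bool) :=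
  ((binaryTransvections ×ˢ binaryTransvections).filter fun ((_, f), (w, _)) => f ⬝ᵥ w = 1).map
    fun ((v, f), (w, g)) => (1 + vecMulVec v f) * (1 + vecMulVec w g)

theorem mem_binaryVectors : ∀ v : Fin 3 → Bool, v ∈ binaryVectors := by
  decide

theorem length_transvectionProducts : transvectionProducts.length = 252 := by
  decide +kernel

theorem one_add_vecMulVec_mul_self {R n : Type*} [BooleanRing R] [Fintype n] [DecidableEq n]
    {v f : n → R} (h : f ⬝ᵥ v = 0) : (1 + vecMulVec v f) * (1 + vecMulVec v f) = 1 := by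
  have hadd : vecMulVec v f + vecMulVec v f = 0 := by ext; exact BooleanRing.add_self _
  rw [add_mul, one_mul, mul_add, mul_one, vecMulVec_mul_vecMulVec, h, zero_smul, vecMulVec_zero,
    add_zero, add_assoc, hadd, add_zero]

theorem dotProduct_eq_zero_of_mem_binaryTransvections {v f : Fin 3 → Bool}
    (h : (v, f) ∈ binaryTransvections) : f ⬝ᵥ v = 0 :=
  (of_decide_eq_true (List.mem_filter.1 h).2).2.2

theorem exists_involutions_of_mem_transvectionProducts {X : Matrix (Fin 3) (Fin 3) Bool}
    (hX : X ∈ transvectionProducts) : ∃ J₁ J₂, J₁ * J₁ = 1 ∧ J₂ * J₂ = 1 ∧ X = J₁ * J₂ := by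
  obtain ⟨⟨⟨v, f⟩, w, g⟩, h, rfl⟩ := List.mem_map.1 hX
  obtain ⟨hvf, hwg⟩ := List.pair_mem_product.1 (List.mem_filter.1 h).1
  exact ⟨_, _, one_add_vecMulVec_mul_self (dotProduct_eq_zero_of_mem_binaryTransvections hvf),
    one_add_vecMulVec_mul_self (dotProduct_eq_zero_of_mem_binaryTransvections hwg), rfl⟩

theorem countP_trace_mul_transvectionProducts (K : Matrix (Fin 3) (Fin 3) Bool) :
    (transvectionProducts.countP fun X => trace (K * X)) ≤ 144 ∧
      ((transvectionProducts.countP fun X => trace (K * X)) = 144 →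
        ∃ z l, K = vecMulVec z l) := by
  have hrows : ∀ x ∈ binaryVectors, ∀ y ∈ binaryVectors, ∀ z ∈ binaryVectors,
      let N := transvectionProducts.countP fun X => x ⬝ᵥ Xᵀ 0 + y ⬝ᵥ Xᵀ 1 + z ⬝ᵥ Xᵀ 2
      N < 144 ∨ N = 144 ∧ ∃ v ∈ binaryVectors, ∃ l ∈ binaryVectors,
        of ![x, y, z] = vecMulVec v l := by
    decide +kernel
  have hK : of ![K 0, K 1, K 2] = K := by ext i j; fin_cases i <;> rfl
  have htrace (X) : trace (K * X) = K 0 ⬝ᵥ Xᵀ 0 + K 1 ⬝ᵥ Xᵀ 1 + K 2 ⬝ᵥ Xᵀ 2 := trace_fin_three _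
  simp only [htrace]
  rcases hrows _ (mem_binaryVectors (K 0)) _ (mem_binaryVectors (K 1)) _
    (mem_binaryVectors (K 2)) with hN | ⟨hN, z, -, l, -, hzl⟩
  · exact ⟨hN.le, fun h => absurd h hN.ne⟩
  · exact ⟨hN.le, fun _ => ⟨z, l, hK.symm.trans hzl⟩⟩

theorem sum_countP_eq_mul_length {ι α : Type*} [Fintype ι] {p : ι → α → Bool} {L : List α} {k : ℕ}
    (h : ∀ a ∈ L, (Finset.univ.filter fun i => p i a).card = k) :
    ∑ i, L.countP (p i) = k * L.length := by
  induction L with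
  | nil => simp
  | cons a L ih =>
    simp only [List.countP_cons, Finset.sum_add_distrib, List.length_cons, mul_add, mul_one,
      ← Finset.card_filter]
    rw [ih fun b hb => h b (List.mem_cons_of_mem _ hb), h a List.mem_cons_self]

theorem card_filter_dotProduct_of_ne_zero :
    ∀ y : Fin 3 → Bool, y ≠ 0 → (Finset.univ.filter fun u => u ⬝ᵥ y).card = 4 := by
  decide

theorem exists_eq_vecMulVec_of_forall_mem_transvectionProducts
    {K : (Fin 3 → Bool) → Matrix (Fin 3) (Fin 3) Bool}
    {φ : Matrix (Fin 3) (Fin 3) Bool → Fin 3 → Bool} (hK : ∀ u X, trace (K u * X) = u ⬝ᵥ φ X)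
    (hφ : ∀ X ∈ transvectionProducts, φ X ≠ 0) (u : Fin 3 → Bool) :
    ∃ z l, K u = vecMulVec z l := by
  let N (u : Fin 3 → Bool) : ℕ := transvectionProducts.countP fun X => trace (K u * X)
  have hsum : ∑ u, N u = ∑ u : Fin 3 → Bool, if u = 0 then 0 else 144 := by
    have h := sum_countP_eq_mul_length (p := fun u X => trace (K u * X)) fun X hX => by
      simpa only [hK] using card_filter_dotProduct_of_ne_zero _ (hφ X hX)
    rw [length_transvectionProducts] at h
    exact h.trans (by decide)
  have hle (u) : N u ≤ if u = 0 then 0 else 144 := by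
    split_ifs with hu
    · simp [N, hK, hu]
    · exact (countP_trace_mul_transvectionProducts _).1
  have heq := (Finset.sum_eq_sum_iff_of_le fun u _ => hle u).1 hsum u (Finset.mem_univ u)
  split_ifs at heq with hu
  · exact ⟨0, 0, ext_iff_trace_mul_right.2 fun X => by simp [hK, hu]⟩
  · exact (countP_trace_mul_transvectionProducts _).2 heq

end TransvectionProducts

section BinaryField

variable {F : Type*} [Field F]

theorem nonempty_bool_ringEquiv (hF : ∀ c : F, c = 0 ∨ c = 1) : Nonempty (Bool ≃+* F) := by
  have h₂ : (1 + 1 : F) = 0 := (hF (1 + 1)).resolve_right (by simp)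
  let ι : Bool →+* F :=
    { toFun b := bif b then 1 else 0
      map_zero' := rfl
      map_one' := rfl
      map_add' := by rintro (_ | _) (_ | _) <;> simp [Bool.add_eq_xor, h₂]
      map_mul' := by rintro (_ | _) (_ | _) <;> simp [Bool.mul_eq_and] }
  have hinj : Function.Injective ι := by
    rintro (_ | _) (_ | _) <;> simp [ι]
  refine ⟨RingEquiv.ofBijective ι ⟨hinj, fun c => ?_⟩⟩
  rcases hF c with rfl | rfl
  exacts [⟨false, rfl⟩, ⟨true, rfl⟩]

theorem exists_eq_vecMulVec_of_forall_mem_prodInv2 (hF : ∀ c : F, c = 0 ∨ c = 1)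
    {K : (Fin 3 → F) → Matrix (Fin 3) (Fin 3) F} {φ : Matrix (Fin 3) (Fin 3) F → Fin 3 → F}
    (hK : ∀ u X, trace (K u * X) = u ⬝ᵥ φ X) (hφ : ∀ A ∈ ProdInv2 F 3, φ A ≠ 0) (u : Fin 3 → F) :
    ∃ z l, K u = vecMulVec z l := by
  obtain ⟨ι⟩ := nonempty_bool_ringEquiv hF
  let Φ : Matrix (Fin 3) (Fin 3) Bool ≃+* Matrix (Fin 3) (Fin 3) F := ι.mapMatrix
  have htrace (u X) : trace (Φ.symm (K (ι ∘ u)) * X) =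
      u ⬝ᵥ (ι.symm ∘ φ (Φ X)) := by
    apply ι.injective
    have hφ' : ι ∘ ι.symm ∘ φ (Φ X) = φ (Φ X) := by ext; simp
    calc ι (trace (Φ.symm (K (ι ∘ u)) * X))
        = trace (Φ (Φ.symm (K (ι ∘ u)) * X)) := AddMonoidHom.map_trace ι _
      _ = (ι ∘ u) ⬝ᵥ φ (Φ X) := by rw [map_mul, RingEquiv.apply_symm_apply, hK]
      _ = ι (u ⬝ᵥ (ι.symm ∘ φ (Φ X))) := by
        conv_lhs => rw [← hφ']
        exact (RingHom.map_dotProduct ι.toRingHom u _).symm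
  have hne : ∀ X ∈ transvectionProducts, ι.symm ∘ φ (Φ X) ≠ 0 := fun X hX h => by
    obtain ⟨J₁, J₂, h₁, h₂, rfl⟩ := exists_involutions_of_mem_transvectionProducts hX
    refine hφ (Φ (J₁ * J₂)) ⟨Φ J₁, Φ J₂, ?_, ?_, map_mul ..⟩
      (funext fun i => ι.symm.injective ((congrFun h i).trans (map_zero _).symm))
    · rw [← map_mul, h₁, map_one]
    · rw [← map_mul, h₂, map_one]
  obtain ⟨z, l, h⟩ := exists_eq_vecMulVec_of_forall_mem_transvectionProducts htrace hne (ι.symm ∘ u)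
  refine ⟨ι ∘ z, ι ∘ l, ?_⟩
  have hu : ι ∘ ι.symm ∘ u = u := by ext; simp
  rw [hu, RingEquiv.symm_apply_eq] at h
  ext i j
  simp [h, Φ, vecMulVec_apply]

variable {m n : Type*} [Fintype m] [Fintype n]

theorem exists_forall_trace_mul_eq_dotProduct (φ : Matrix n n F →ₗ[F] m → F) :
    ∃ K : (m → F) → Matrix n n F, ∀ u X, trace (K u * X) = u ⬝ᵥ φ X := by
  classical
  let K (u : m → F) : Matrix n n F := of fun j i => u ⬝ᵥ φ (single i j 1)
  have hK (u) : traceLinearMap n F F ∘ₗ LinearMap.mulLeft F (K u) = dotProductEquiv F m u ∘ₗ φ :=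
    ext_linearMap _ fun i j => LinearMap.ext_ring (by simp [K, trace_mul_single])
  exact ⟨K, fun u => LinearMap.congr_fun (hK u)⟩

theorem exists_ne_zero_mem_span_singleton {V : Type*} [AddCommGroup V] [Module F V] [Nontrivial V]
    (z : V) : ∃ e ≠ 0, z ∈ F ∙ e := by
  rcases eq_or_ne z 0 with rfl | hz
  · obtain ⟨e, he⟩ := exists_ne (0 : V)
    exact ⟨e, he, zero_mem _⟩
  · exact ⟨z, hz, Submodule.mem_span_singleton_self z⟩

theorem exists_ne_zero_forall_mulVec_or_forall_vecMul [Nonempty n] {K : (m → F) → Matrix n n F}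
    {φ : Matrix n n F → m → F} (hK : ∀ u X, trace (K u * X) = u ⬝ᵥ φ X)
    (h₁ : ∀ u, ∃ z l, K u = vecMulVec z l) :
    ∃ e ≠ 0, (∀ X, X *ᵥ e = 0 → φ X = 0) ∨ ∀ X, e ᵥ* X = 0 → φ X = 0 := by
  classical
  have hadd (u v) : K (u + v) = K u + K v :=
    ext_iff_trace_mul_right.2 fun X => by simp [add_mul, hK, add_dotProduct]
  have hrank (u) : IsRankLEOne (toLin' (K u)) := by
    obtain ⟨z, l, h⟩ := h₁ u
    refine isRankLEOne_of_forall_mem_span (z := z) fun w => ?_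
    exact Submodule.mem_span_singleton.2 ⟨l ⬝ᵥ w, by simp [h, vecMulVec_mulVec]⟩
  have hφ {X} (hX : ∀ u, trace (K u * X) = 0) : φ X = 0 :=
    dotProduct_eq_zero _ fun u => by rw [dotProduct_comm, ← hK, hX]
  rcases exists_mem_span_or_exists_ker_le_of_pairwise (S := Set.range fun u => toLin' (K u))
    (by rintro _ ⟨u, rfl⟩; exact hrank u) (by
      rintro _ ⟨u, rfl⟩ _ ⟨v, rfl⟩ -
      exact ⟨1, one_ne_zero, by simpa [hadd] using hrank (u + v)⟩) with ⟨z, hz⟩ | ⟨l, hl⟩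
  · obtain ⟨e, he, hze⟩ := exists_ne_zero_mem_span_singleton (F := F) z
    obtain ⟨c, rfl⟩ := Submodule.mem_span_singleton.1 hze
    refine ⟨e, he, .inl fun X hX => hφ fun u => ?_⟩
    have hXK : X * K u = 0 := ext_iff_mulVec.2 fun w => by
      obtain ⟨d, hd⟩ := Submodule.mem_span_singleton.1 (hz _ ⟨u, rfl⟩ w)
      rw [toLin'_apply] at hd
      rw [← mulVec_mulVec, ← hd, mulVec_smul, mulVec_smul, hX, smul_zero, smul_zero, zero_mulVec]
    rw [trace_mul_comm, hXK, trace_zero]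
  · obtain ⟨e₀, rfl⟩ := (dotProductEquiv F n).surjective l
    obtain ⟨e, he, hel⟩ := exists_ne_zero_mem_span_singleton (F := F) e₀
    obtain ⟨c, rfl⟩ := Submodule.mem_span_singleton.1 hel
    refine ⟨e, he, .inr fun X hX => hφ fun u => ?_⟩
    have hKX : K u * X = 0 := ext_iff_mulVec.2 fun w => by
      rw [← mulVec_mulVec, ← toLin'_apply, hl _ ⟨u, rfl⟩ _ (by simp [dotProduct_mulVec, hX]),
        zero_mulVec]
    rw [hKX, trace_zero]

theorem isStandardMap_of_forall_eq_zero_or_eq_one (hF : ∀ c : F, c = 0 ∨ c = 1)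
    {T : Matrix (Fin 3) (Fin 3) F →ₗ[F] Matrix (Fin 3) (Fin 3) F} (hT : Function.Bijective T)
    (hunit : ∀ A ∈ ProdInv2 F 3, IsUnit (T A)) : IsStandardMap T := by
  refine isStandardMap_of_forall_exists_or (T := LinearEquiv.ofBijective T hT) fun k hk => ?_
  let φ : Matrix (Fin 3) (Fin 3) F →ₗ[F] Fin 3 → F := (mulVecBilin F F).flip k ∘ₗ T
  obtain ⟨K, hK⟩ := exists_forall_trace_mul_eq_dotProduct φ
  refine exists_ne_zero_forall_mulVec_or_forall_vecMul hK
    (exists_eq_vecMulVec_of_forall_mem_prodInv2 hF hK fun A hA hφA => ?_)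
  exact hk (eq_zero_of_mulVec_eq_zero ((isUnit_iff_isUnit_det _).1 (hunit A hA)).ne_zero hφA)

end BinaryField

theorem stmt10_general (F : Type*) [Field F] (n : ℕ) (hn : 2 ≤ n)
    (T : Matrix (Fin n) (Fin n) F →ₗ[F] Matrix (Fin n) (Fin n) F)
    (hT : Function.Bijective T) (hdet : ∀ A ∈ ProdInv2 F n, (T A).det ^ 2 = 1) :
    ∃ P : Matrix (Fin n) (Fin n) F, IsUnit P ∧
      ((∀ X, T X = T 1 * (P * X * P⁻¹)) ∨ ∀ X, T X = T 1 * (P * Xᵀ * P⁻¹)) := by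
  suffices IsStandardMap T from this.exists_eq_apply_one_mul
  have hunit : ∀ A ∈ ProdInv2 F n, IsUnit (T A) := fun A hA =>
    (isUnit_iff_isUnit_det _).2 (.of_pow_eq_one (hdet A hA) two_ne_zero)
  obtain rfl | hn₃ : n = 2 ∨ 3 ≤ n := by lia
  · by_cases hF : ∃ c : F, c ≠ 0 ∧ c ^ 2 ≠ 1
    · exact isStandardMap_of_exists_sq_ne_one hF hT.surjective hdet
    · exact isStandardMap_of_forall_eq_zero_or_sq_eq_one
        (fun c => or_iff_not_and_not.2 (not_exists.1 hF c)) hT hunit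
  obtain rfl | hn₄ : n = 3 ∨ 4 ≤ n := by lia
  · by_cases hF : ∃ c : F, c ≠ 0 ∧ c ≠ 1
    · exact isStandardMap_of_three_le hn₃ (.inl hF) hT hunit
    · exact isStandardMap_of_forall_eq_zero_or_eq_one
        (fun c => or_iff_not_and_not.2 (not_exists.1 hF c)) hT hunit
  · exact isStandardMap_of_three_le hn₃ (.inr hn₄) hT hunit

theorem stmt10 (F : Type*) [Field F] (n : ℕ) (hn : 2 ≤ n)
    (S : Set (Matrix (Fin n) (Fin n) F))
    (hS : S = ProdInv2 F n ∨ S = ProdInv3 F n ∨ S = ProdInv4 F n)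
    (T : Matrix (Fin n) (Fin n) F →ₗ[F] Matrix (Fin n) (Fin n) F)
    (hT : Function.Bijective T) (hpres : ∀ A ∈ S, T A ∈ S) :
    ∃ (r : F) (P : Matrix (Fin n) (Fin n) F), r ^ (2 * n) = 1 ∧ IsUnit P ∧
      ((∀ X, Matrix.trace X = 0 → T X = r • (T 1 * (P * X * P⁻¹))) ∨
       (∀ X, Matrix.trace X = 0 → T X = r • (T 1 * (P * Xᵀ * P⁻¹)))) ∧
      (0 < ringChar F → ringChar F ∣ n → r = 1) := by
  obtain ⟨P, hP, h⟩ := stmt10_general F n hn T hT fun A => det_apply_sq_eq_one hS hpres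
  refine ⟨1, P, one_pow _, hP, ?_, fun _ _ => rfl⟩
  simpa only [one_smul] using h.imp (fun h X _ => h X) (fun h X _ => h X)
end

section
/- Let F be a field with char(F) ≠ 2, let n ≥ 2, let S_n be any one of the sets B_n, C_n, D_n, and let T : M_n(F) → M_n(F) be a bijective linear map such that T(S_n) ⊆ S_n. Suppose there exist a nonzero scalar r ∈ F and an invertible matrix P ∈ M_n(F) such that either T(X) = r·T(I)·P·X·P⁻¹ for all X ∈ M_n(F) with trace(X) = 0, or T(X) = r·T(I)·P·Xᵗ·P⁻¹ for all X ∈ M_n(F) with trace(X) = 0. Then r ∈ {−1, 1} if n = 2, and r = 1 if n ≥ 3. -/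
open Matrix

/-!
For `A` with `trace A = n * a`, splitting `A` as `a • 1 + (A - a • 1)` shows that
`det (T A) = det (T 1) * det (((1 - r) * a) • 1 + r • A)`. If `A` is a product of two involutions,
the determinants of `T A` and `T 1` both square to `1`, so the pencil on the right has determinant
squaring to `1` as well. A product of two reflections acting in a coordinate plane has determinant
`1` and arbitrary trace, so `a` can be prescribed.

* For `n = 2` the pencil has determinant `r ^ 2 + (1 - r ^ 2) * a ^ 2`, and `a = 0` and `a = r`
  already force `r ^ 2 = 1`.
* For `n ≥ 3` the product fixes a vector, on which the pencil acts as `(1 - r) * a + r`. If `r ≠ 1`,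
  the choice `a = -r / (1 - r)` makes the pencil singular, which is impossible.
-/

section Reflection

variable {ι R : Type*} [Fintype ι] [DecidableEq ι] [CommRing R]

theorem sq_det_eq_one_of_mul_self_eq_one {J : Matrix ι ι R} (hJ : J * J = 1) : J.det ^ 2 = 1 := by
  rw [sq, ← det_mul, hJ, det_one]

theorem one_sub_vecMulVec_mul_self {u v : ι → R} (h : v ⬝ᵥ u = 2) :
    (1 - vecMulVec u v) * (1 - vecMulVec u v) = 1 := by
  have hsq : vecMulVec u v * vecMulVec u v = (2 : R) • vecMulVec u v := by
    rw [vecMulVec_mul_vecMulVec, h, vecMulVec_smul]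
  rw [sub_mul, one_mul, mul_sub, mul_one, hsq, two_smul]
  abel

theorem det_one_sub_vecMulVec (u v : ι → R) : (1 - vecMulVec u v).det = 1 - v ⬝ᵥ u := by
  rw [sub_eq_add_neg, ← neg_vecMulVec, vecMulVec_eq Unit,
    det_one_add_replicateCol_mul_replicateRow, dotProduct_neg, sub_eq_add_neg]

theorem trace_one_sub_vecMulVec_mul (u v u' v' : ι → R) :
    trace ((1 - vecMulVec u v) * (1 - vecMulVec u' v')) =
      Fintype.card ι - v ⬝ᵥ u - v' ⬝ᵥ u' + (v ⬝ᵥ u') * (v' ⬝ᵥ u) := by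
  rw [sub_mul, one_mul, mul_sub, mul_one, vecMulVec_mul_vecMulVec, vecMulVec_smul]
  simp only [trace_sub, trace_one, trace_smul, trace_vecMulVec, smul_eq_mul, dotProduct_comm u,
    dotProduct_comm u']
  ring

theorem one_sub_vecMulVec_mulVec_of_dotProduct_eq_zero (u : ι → R) {v w : ι → R}
    (h : v ⬝ᵥ w = 0) : (1 - vecMulVec u v) *ᵥ w = w := by
  rw [sub_mulVec, one_mulVec, vecMulVec_mulVec, h, MulOpposite.op_zero, zero_smul, sub_zero]

end Reflection

section Pencil

variable {ι R : Type*} [Fintype ι] [DecidableEq ι] [CommRing R]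

theorem det_map_eq_det_map_one_mul {T : Matrix ι ι R →ₗ[R] Matrix ι ι R} {r : R}
    {P : Matrix ι ι R} (hP : IsUnit P)
    (hform : (∀ X, trace X = 0 → T X = r • (T 1 * (P * X * P⁻¹))) ∨
      (∀ X, trace X = 0 → T X = r • (T 1 * (P * Xᵀ * P⁻¹))))
    {A : Matrix ι ι R} {a : R} (ha : trace A = Fintype.card ι * a) :
    (T A).det = (T 1).det * (((1 - r) * a) • (1 : Matrix ι ι R) + r • A).det := by
  have htr : trace (A - a • (1 : Matrix ι ι R)) = 0 := by
    rw [trace_sub, trace_smul, trace_one, ha, smul_eq_mul, mul_comm, sub_self]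
  have hsplit : T A = a • T 1 + T (A - a • 1) := by
    rw [map_sub, map_smul, add_sub_cancel]
  have hdet (B : Matrix ι ι R) (hB : T (A - a • 1) = r • (T 1 * (P * (B - a • 1) * P⁻¹))) :
      (T A).det = (T 1).det * (((1 - r) * a) • (1 : Matrix ι ι R) + r • B).det := by
    have hPP : P * P⁻¹ = 1 := mul_nonsing_inv P ((isUnit_iff_isUnit_det P).1 hP)
    have hfactor : T A = T 1 * (P * (((1 - r) * a) • 1 + r • B) * P⁻¹) := by
      rw [hsplit, hB]
      simp only [mul_add, add_mul, mul_sub, sub_mul, mul_smul_comm, smul_mul_assoc, mul_one, hPP]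
      module
    rw [hfactor, det_mul, det_conj hP]
  rcases hform with h | h
  · exact hdet A (h _ htr)
  · rw [← det_transpose (_ + _), transpose_add, transpose_smul, transpose_smul, transpose_one]
    refine hdet Aᵀ ?_
    rw [h _ htr, transpose_sub, transpose_smul, transpose_one]

theorem det_smul_one_add_smul_fin_two (c r : R) (A : Matrix (Fin 2) (Fin 2) R) :
    (c • (1 : Matrix (Fin 2) (Fin 2) R) + r • A).det =
      c ^ 2 + c * r * trace A + r ^ 2 * A.det := by
  simp only [det_fin_two, trace_fin_two, Matrix.add_apply, Matrix.smul_apply,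
    smul_eq_mul, one_apply_eq, one_apply_ne zero_ne_one, one_apply_ne one_ne_zero]
  ring

theorem sq_eq_one_of_forall_sq_eq_one [IsReduced R] {r : R}
    (h : ∀ a : R, (r ^ 2 + (1 - r ^ 2) * a ^ 2) ^ 2 = 1) : r ^ 2 = 1 := by
  have h₁ : (r ^ 2 - 1) * (r ^ 2 + 1) = 0 := by linear_combination h 0
  have h₂ : 4 * (r ^ 2 - 1) = 0 := by linear_combination (r ^ 4 - 4 * r ^ 2 + 5) * h₁ - h r
  have hcube : (r ^ 2 - 1) ^ 3 = 0 := by linear_combination (r ^ 2 - 3) * h₁ + h₂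
  exact sub_eq_zero.1 (eq_zero_of_pow_eq_zero hcube)

end Pencil

section ProdInv

variable {F : Type*} [Field F] {n : ℕ}

theorem prodInv2_subset_prodInv3 : ProdInv2 F n ⊆ ProdInv3 F n := by
  rintro _ ⟨J₁, J₂, h₁, h₂, rfl⟩
  exact ⟨J₁, J₂, 1, h₁, h₂, one_mul 1, (mul_one _).symm⟩

theorem prodInv3_subset_prodInv4 : ProdInv3 F n ⊆ ProdInv4 F n := by
  rintro _ ⟨J₁, J₂, J₃, h₁, h₂, h₃, rfl⟩
  exact ⟨J₁, J₂, J₃, 1, h₁, h₂, h₃, one_mul 1, (mul_one _).symm⟩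

theorem prodInv2_subset_and_subset_prodInv4 {S : Set (Matrix (Fin n) (Fin n) F)}
    (hS : S = ProdInv2 F n ∨ S = ProdInv3 F n ∨ S = ProdInv4 F n) :
    ProdInv2 F n ⊆ S ∧ S ⊆ ProdInv4 F n := by
  have h₂₄ : ProdInv2 F n ⊆ ProdInv4 F n := prodInv2_subset_prodInv3.trans prodInv3_subset_prodInv4
  rcases hS with rfl | rfl | rfl
  · exact ⟨subset_rfl, h₂₄⟩
  · exact ⟨prodInv2_subset_prodInv3, prodInv3_subset_prodInv4⟩
  · exact ⟨h₂₄, subset_rfl⟩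

theorem one_mem_prodInv2 : (1 : Matrix (Fin n) (Fin n) F) ∈ ProdInv2 F n :=
  ⟨1, 1, one_mul 1, one_mul 1, (one_mul 1).symm⟩

theorem sq_det_eq_one_of_mem_prodInv4 {A : Matrix (Fin n) (Fin n) F} (hA : A ∈ ProdInv4 F n) :
    A.det ^ 2 = 1 := by
  obtain ⟨J₁, J₂, J₃, J₄, h₁, h₂, h₃, h₄, rfl⟩ := hA
  simp only [det_mul, mul_pow, sq_det_eq_one_of_mul_self_eq_one, h₁, h₂, h₃, h₄, one_mul]

theorem exists_mem_prodInv2_trace_eq {i j : Fin n} (hij : i ≠ j) (t : F) :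
    ∃ A ∈ ProdInv2 F n, trace A = t ∧ A.det = 1 ∧
      ∀ w : Fin n → F, w i = 0 → w j = 0 → A *ᵥ w = w := by
  let u : Fin n → F := Pi.single i 1
  let v : Fin n → F := Pi.single i 2 + Pi.single j 1
  let u' : Fin n → F := Pi.single j 1
  let v' : Fin n → F := Pi.single i (t - n + 4) + Pi.single j 2
  have hvu : v ⬝ᵥ u = 2 := by simp [u, v, hij]
  have hvu' : v' ⬝ᵥ u' = 2 := by simp [u', v', hij.symm]
  have hcross : v ⬝ᵥ u' = 1 := by simp [u', v, hij.symm]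
  have hcross' : v' ⬝ᵥ u = t - n + 4 := by simp [u, v', hij]
  refine ⟨(1 - vecMulVec u v) * (1 - vecMulVec u' v'),
    ⟨_, _, one_sub_vecMulVec_mul_self hvu, one_sub_vecMulVec_mul_self hvu', rfl⟩, ?_, ?_, ?_⟩
  · rw [trace_one_sub_vecMulVec_mul, hvu, hvu', hcross, hcross', Fintype.card_fin]
    ring
  · rw [det_mul, det_one_sub_vecMulVec, det_one_sub_vecMulVec, hvu, hvu']
    ring
  · intro w hi hj
    have hv : v ⬝ᵥ w = 0 := by simp [v, hi, hj]
    have hv' : v' ⬝ᵥ w = 0 := by simp [v', hi, hj]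
    rw [← mulVec_mulVec, one_sub_vecMulVec_mulVec_of_dotProduct_eq_zero u' hv',
      one_sub_vecMulVec_mulVec_of_dotProduct_eq_zero u hv]

theorem exists_mem_prodInv2_det_pencil_fin_two (r a : F) :
    ∃ A ∈ ProdInv2 F 2, trace A = 2 * a ∧
      (((1 - r) * a) • (1 : Matrix (Fin 2) (Fin 2) F) + r • A).det =
        r ^ 2 + (1 - r ^ 2) * a ^ 2 := by
  obtain ⟨A, hA, htr, hdet, -⟩ := exists_mem_prodInv2_trace_eq (zero_ne_one (α := Fin 2)) (2 * a)
  refine ⟨A, hA, htr, ?_⟩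
  rw [det_smul_one_add_smul_fin_two, htr, hdet]
  ring

theorem exists_mem_prodInv2_det_pencil_eq_zero (hn : 3 ≤ n) {r : F} (hr : r ≠ 1) :
    ∃ A ∈ ProdInv2 F n, ∃ a : F, trace A = n * a ∧
      (((1 - r) * a) • (1 : Matrix (Fin n) (Fin n) F) + r • A).det = 0 := by
  let i : Fin n := ⟨0, by omega⟩
  let j : Fin n := ⟨1, by omega⟩
  let k : Fin n := ⟨2, by omega⟩
  have hij : i ≠ j := by simp [i, j]
  have hik : i ≠ k := by simp [i, k]
  have hjk : j ≠ k := by simp [j, k]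
  have ha : (1 - r) * (-r / (1 - r)) = -r := mul_div_cancel₀ _ (sub_ne_zero.2 hr.symm)
  obtain ⟨A, hA, htr, -, hfix⟩ := exists_mem_prodInv2_trace_eq hij (n * (-r / (1 - r)))
  refine ⟨A, hA, _, htr, exists_mulVec_eq_zero_iff.1 ⟨Pi.single k 1, by simp, ?_⟩⟩
  rw [ha, add_mulVec, smul_mulVec, smul_mulVec, one_mulVec,
    hfix _ (Pi.single_eq_of_ne hik 1) (Pi.single_eq_of_ne hjk 1), neg_smul, neg_add_cancel]

end ProdInv

theorem stmt11_general {F : Type*} [Field F] {n : ℕ}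
    {T : Matrix (Fin n) (Fin n) F →ₗ[F] Matrix (Fin n) (Fin n) F}
    (hT : ∀ A ∈ ProdInv2 F n, (T A).det ^ 2 = 1)
    {r : F} {P : Matrix (Fin n) (Fin n) F} (hP : IsUnit P)
    (hform : (∀ X, trace X = 0 → T X = r • (T 1 * (P * X * P⁻¹))) ∨
      (∀ X, trace X = 0 → T X = r • (T 1 * (P * Xᵀ * P⁻¹)))) :
    (n = 2 → r = 1 ∨ r = -1) ∧ (3 ≤ n → r = 1) := by
  have hpencil {A : Matrix (Fin n) (Fin n) F} (hA : A ∈ ProdInv2 F n) {a : F}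
      (ha : trace A = n * a) :
      (((1 - r) * a) • (1 : Matrix (Fin n) (Fin n) F) + r • A).det ^ 2 = 1 := by
    have hTA := hT A hA
    rwa [det_map_eq_det_map_one_mul hP hform (by rwa [Fintype.card_fin]), mul_pow,
      hT 1 one_mem_prodInv2, one_mul] at hTA
  constructor
  · rintro rfl
    refine sq_eq_one_iff.1 (sq_eq_one_of_forall_sq_eq_one fun a => ?_)
    obtain ⟨A, hA, htr, hdet⟩ := exists_mem_prodInv2_det_pencil_fin_two r a
    rw [← hdet]
    exact hpencil hA (mod_cast htr)
  · intro hn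
    by_contra hr
    obtain ⟨A, hA, a, htr, hdet⟩ := exists_mem_prodInv2_det_pencil_eq_zero hn hr
    simpa [hdet] using hpencil hA htr

theorem stmt11 (F : Type*) [Field F] (hchar : ringChar F ≠ 2) (n : ℕ) (hn : 2 ≤ n)
    (S : Set (Matrix (Fin n) (Fin n) F))
    (hS : S = ProdInv2 F n ∨ S = ProdInv3 F n ∨ S = ProdInv4 F n)
    (T : Matrix (Fin n) (Fin n) F →ₗ[F] Matrix (Fin n) (Fin n) F)
    (hT : Function.Bijective T) (hpres : ∀ A ∈ S, T A ∈ S)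
    (r : F) (hr : r ≠ 0) (P : Matrix (Fin n) (Fin n) F) (hP : IsUnit P)
    (hform : (∀ X, Matrix.trace X = 0 → T X = r • (T 1 * (P * X * P⁻¹))) ∨
             (∀ X, Matrix.trace X = 0 → T X = r • (T 1 * (P * Xᵀ * P⁻¹)))) :
    (n = 2 → r = 1 ∨ r = -1) ∧ (3 ≤ n → r = 1) := by
  obtain ⟨hS2, hS4⟩ := prodInv2_subset_and_subset_prodInv4 hS
  exact stmt11_general (fun A hA => sq_det_eq_one_of_mem_prodInv4 (hS4 (hpres A (hS2 hA)))) hP hform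
end
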